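/- (Fefferman–Stein vector-valued maximal inequality on mixed-norm Herz spaces.) Let n ∈ ℕ, p⃗, q⃗ = (q_1,…,q_n) ∈ (1,∞)^n, α⃗ = (α_1,…,α_n) ∈ ℝⁿ with α_i ∈ (-1/q_i, 1 - 1/q_i) for every i ∈ {1,…,n}, and u ∈ (1,∞). Then there exists a positive constant C such that for every sequence {f_j}_{j∈ℤ} of measurable functions on ℝⁿ, ‖(Σ_{j∈ℤ} [M(f_j)]^u)^{1/u}‖_{Ė^{α⃗,p⃗}_{q⃗}(ℝⁿ)} ≤ C ‖(Σ_{j∈ℤ} |f_j|^u)^{1/u}‖_{Ė^{α⃗,p⃗}_{q⃗}(ℝⁿ)}, where M is the centered Hardy–Littlewood maximal operator. -/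

import Mathlib

open MeasureTheory ENNReal Filter

noncomputable section

/-- The dyadic annulus `R_k = (-2^k, 2^k) \ (-2^(k-1), 2^(k-1))` in `ℝ`. -/
def herzRing (k : ℤ) : Set ℝ :=
  Set.Ioo (-(2 : ℝ) ^ k) ((2 : ℝ) ^ k) \ Set.Ioo (-(2 : ℝ) ^ (k - 1)) ((2 : ℝ) ^ (k - 1))

/-- The `L^q` "norm" (valued in `ℝ≥0∞`) of an `ℝ≥0∞`-valued function on a set `s ⊆ ℝ`,
with the usual modification when `q = ∞`. -/
def lqNormOn (q : ℝ≥0∞) (s : Set ℝ) (g : ℝ → ℝ≥0∞) : ℝ≥0∞ :=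
  if q = ∞ then essSup (s.indicator g) volume
  else (∫⁻ x in s, g x ^ q.toReal) ^ (1 / q.toReal)

/-- The `l^p` norm over `ℤ` of an `ℝ≥0∞`-valued sequence, with the usual modification
when `p = ∞`. -/
def lpZNorm (p : ℝ≥0∞) (a : ℤ → ℝ≥0∞) : ℝ≥0∞ :=
  if p = ∞ then ⨆ k, a k
  else (∑' k : ℤ, a k ^ p.toReal) ^ (1 / p.toReal)

/-- The one-dimensional Herz norm `K^{α,p}_q` of an `ℝ≥0∞`-valued function on `ℝ`. -/
def herzNorm1 (α : ℝ) (p q : ℝ≥0∞) (g : ℝ → ℝ≥0∞) : ℝ≥0∞ :=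
  lpZNorm p fun k => ENNReal.ofReal ((2 : ℝ) ^ ((k : ℝ) * α)) * lqNormOn q (herzRing k) g

/-- The mixed-norm Herz norm on `ℝⁿ` of an `ℝ≥0∞`-valued function: the Herz norm
`K^{α_1,p_1}_{q_1}` is applied in the first variable, then `K^{α_2,p_2}_{q_2}` in the
second variable, …, and finally `K^{α_n,p_n}_{q_n}` in the last variable. -/
def mixedHerzNormE : (n : ℕ) → (Fin n → ℝ) → (Fin n → ℝ≥0∞) → (Fin n → ℝ≥0∞) →
    ((Fin n → ℝ) → ℝ≥0∞) → ℝ≥0∞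
  | 0, _, _, _, f => f fun i => i.elim0
  | n + 1, α, p, q, f =>
    herzNorm1 (α (Fin.last n)) (p (Fin.last n)) (q (Fin.last n)) fun xlast =>
      mixedHerzNormE n (Fin.init α) (Fin.init p) (Fin.init q) fun y => f (Fin.snoc y xlast)

/-- The mixed-norm Herz norm `‖f‖_{Ė^{α,p}_q(ℝⁿ)}` of a complex-valued function on `ℝⁿ`. -/
def herzNormC (n : ℕ) (α : Fin n → ℝ) (p q : Fin n → ℝ≥0∞) (f : (Fin n → ℝ) → ℂ) : ℝ≥0∞ :=
  mixedHerzNormE n α p q fun x => (‖f x‖₊ : ℝ≥0∞)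

/-- `I_m = (-2^m, -2^{-m}] ∪ [2^{-m}, 2^m)`. -/
def herzI (m : ℕ) : Set ℝ :=
  Set.Ioc (-(2 : ℝ) ^ (m : ℤ)) (-(2 : ℝ) ^ (-(m : ℤ))) ∪
    Set.Ico ((2 : ℝ) ^ (-(m : ℤ))) ((2 : ℝ) ^ (m : ℤ))

/-- `A_m = I_m^n ⊆ ℝⁿ`. -/
def herzA (n m : ℕ) : Set (Fin n → ℝ) := Set.univ.pi fun _ => herzI m

/-- The class `H(ℝⁿ)` of simple functions built from finitely many pairwise disjoint
parallelepipeds contained in some `A_m`. -/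
def IsHSimple (n : ℕ) (f : (Fin n → ℝ) → ℂ) : Prop :=
  ∃ (m N : ℕ) (a : Fin N → ℂ) (E : Fin N → Fin n → Set ℝ),
    (∀ k i, MeasurableSet (E k i)) ∧
    (∀ k, Set.univ.pi (E k) ⊆ herzA n m) ∧
    (Pairwise fun k l => Disjoint (Set.univ.pi (E k)) (Set.univ.pi (E l))) ∧
    f = fun x => ∑ k, (Set.univ.pi (E k)).indicator (fun _ => a k) x

/-- The Euclidean ball `B(x,r)` in `ℝⁿ`. -/
def eucBall (n : ℕ) (x : Fin n → ℝ) (r : ℝ) : Set (Fin n → ℝ) :=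
  {y | ∑ i, (y i - x i) ^ 2 < r ^ 2}

/-- The (uncentered) maximal operator in the `k`-th variable. -/
def maxVar (n : ℕ) (k : Fin n) (g : (Fin n → ℝ) → ℝ≥0∞) : (Fin n → ℝ) → ℝ≥0∞ :=
  fun x => ⨆ (a : ℝ) (b : ℝ) (_ : x k ∈ Set.Ioo a b),
    (volume (Set.Ioo a b))⁻¹ * ∫⁻ y in Set.Ioo a b, g (Function.update x k y)

/-- The centered Hardy–Littlewood maximal operator on `ℝⁿ`. -/
def centeredMax (n : ℕ) (g : (Fin n → ℝ) → ℝ≥0∞) : (Fin n → ℝ) → ℝ≥0∞ :=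
  fun x => ⨆ (r : ℝ) (_ : 0 < r),
    (volume (eucBall n x r))⁻¹ * ∫⁻ y in eucBall n x r, g y

/-- The composition `M_n ∘ ⋯ ∘ M_1` of the maximal operators in each variable. -/
def iteratedMax (n : ℕ) (g : (Fin n → ℝ) → ℝ≥0∞) : (Fin n → ℝ) → ℝ≥0∞ :=
  (List.ofFn fun k : Fin n => maxVar n k).foldl (fun h F => F h) g

/-- The iterated maximal operator `ℳ_t(f) = [M_n ⋯ M_1(|f|^t)]^{1/t}`. -/
def iterMaxPow (n : ℕ) (t : ℝ) (f : (Fin n → ℝ) → ℂ) : (Fin n → ℝ) → ℝ≥0∞ :=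
  fun x => iteratedMax n (fun y => (‖f y‖₊ : ℝ≥0∞) ^ t) x ^ (1 / t)

/-- The `l^r`-Herz type mixed norm of a sequence of functions on `ℝⁿ`. -/
def herzSeqNorm (n : ℕ) (r : ℝ≥0∞) (α : Fin n → ℝ) (p q : Fin n → ℝ≥0∞)
    (F : ℤ → (Fin n → ℝ) → ℂ) : ℝ≥0∞ :=
  mixedHerzNormE n α p q fun x => lpZNorm r fun j => (‖F j x‖₊ : ℝ≥0∞)

/-- `N` is a ball quasi-Banach function norm on (nonnegative extended-real-valued)
measurable functions on `ℝⁿ`. -/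
def IsBQBFNorm (n : ℕ) (N : ((Fin n → ℝ) → ℝ≥0∞) → ℝ≥0∞) : Prop :=
  (∀ f : (Fin n → ℝ) → ℝ≥0∞, Measurable f → N f = 0 → f =ᵐ[volume] 0) ∧
  (∀ f g : (Fin n → ℝ) → ℝ≥0∞, Measurable f → Measurable g →
    (∀ᵐ x ∂volume, g x ≤ f x) → N g ≤ N f) ∧
  (∀ (fm : ℕ → (Fin n → ℝ) → ℝ≥0∞) (f : (Fin n → ℝ) → ℝ≥0∞),
    (∀ m, Measurable (fm m)) → Measurable f →
    (∀ᵐ x ∂volume, Monotone (fun m => fm m x) ∧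
      Tendsto (fun m => fm m x) atTop (nhds (f x))) →
    Monotone (fun m => N (fm m)) ∧ Tendsto (fun m => N (fm m)) atTop (nhds (N f))) ∧
  (∀ (x : Fin n → ℝ) (r : ℝ), 0 < r →
    N ((eucBall n x r).indicator fun _ => (1 : ℝ≥0∞)) ≠ ∞)

/-- `N` is a ball Banach function norm: a ball quasi-Banach function norm that moreover
satisfies the triangle inequality and locally dominates the `L¹` norm. -/
def IsBallBanachNorm (n : ℕ) (N : ((Fin n → ℝ) → ℝ≥0∞) → ℝ≥0∞) : Prop :=
  IsBQBFNorm n N ∧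
  (∀ f g : (Fin n → ℝ) → ℝ≥0∞, Measurable f → Measurable g → N (f + g) ≤ N f + N g) ∧
  (∀ (x : Fin n → ℝ) (r : ℝ), 0 < r → ∃ C : ℝ≥0∞, 0 < C ∧ C ≠ ∞ ∧
    ∀ f : (Fin n → ℝ) → ℝ≥0∞, Measurable f → (∫⁻ y in eucBall n x r, f y) ≤ C * N f)

/-- The associate (Köthe dual) norm of a function norm `N`. -/
def assocNormOf (n : ℕ) (N : ((Fin n → ℝ) → ℝ≥0∞) → ℝ≥0∞)
    (f : (Fin n → ℝ) → ℝ≥0∞) : ℝ≥0∞ :=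
  ⨆ (g : (Fin n → ℝ) → ℝ≥0∞) (_ : Measurable g) (_ : N g = 1), ∫⁻ x, f x * g x

/-- The `θ`-convexification of a function norm: `‖f‖_{X^θ} = ‖|f|^θ‖_X^{1/θ}`
(here stated with `θ` in place of `1/p`, so `X^{1/p}` is `convexPow n (1/p) N`). -/
def convexPow (n : ℕ) (θ : ℝ) (N : ((Fin n → ℝ) → ℝ≥0∞) → ℝ≥0∞)
    (f : (Fin n → ℝ) → ℝ≥0∞) : ℝ≥0∞ :=
  N (fun x => f x ^ θ) ^ (1 / θ)

/-- The associate space norm of the mixed-norm Herz space, for complex-valued functions. -/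
def herzAssocNormC (n : ℕ) (α : Fin n → ℝ) (p q : Fin n → ℝ≥0∞)
    (f : (Fin n → ℝ) → ℂ) : ℝ≥0∞ :=
  ⨆ (g : (Fin n → ℝ) → ℂ) (_ : Measurable g) (_ : herzNormC n α p q g = 1),
    ∫⁻ x, (‖f x * g x‖₊ : ℝ≥0∞)

/-!
Say that a Banach function norm `ρ` has the Hardy–Littlewood property when the dyadic maximal
functions of lattice-valued functions are of weak type `(1, 1)` in the norm `ρ`, uniformly over all
dyadic filtrations. Splitting a function by the stopping time at which the averages of `ρ ∘ f` first
exceed a level shows that a strong type bound for one exponent implies the weak type `(1, 1)` bound,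
and a good-`λ` argument shows that the weak type bound implies the strong type bounds for all
exponents `1 < s < ∞`. By Fubini's theorem the strong type `(s, s)` bound for `ρ` is the one for
`L^s(μ; ρ)`, so the property passes from `ρ` to `L^s(μ; ρ)`; hence `ℓ^u` and every iterated Herz
norm built over it have it.

On `ℝ`, the one-third trick dominates the centered maximal function by the dyadic ones of two grids,
and applying this variable by variable reduces the theorem to one dimension. There, a function is
split along the dyadic rings: the Hardy–Littlewood property bounds the interaction of neighbouring
rings, Hölder's inequality that of distant ones. Since `-1 / q < α < 1 - 1 / q`, the latter decays
geometrically in the distance of the indices, and Young's inequality for convolutions on `ℤ` sums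
the pieces.
-/

section Lp

variable {X Y : Type*} [MeasurableSpace X] [MeasurableSpace Y]

theorem rpow_one_div_le_of_le_mul_rpow {s : ℝ} (hs : 0 < s) {A K : ℝ≥0∞} (hA : A ≠ ∞)
    (h : A ≤ K * A ^ (1 - 1 / s)) : A ^ (1 / s) ≤ K := by
  rcases eq_or_ne A 0 with rfl | hA0
  · rw [ENNReal.zero_rpow_of_pos (by positivity)]
    exact zero_le
  · have hsplit : A = A ^ (1 / s) * A ^ (1 - 1 / s) := by
      rw [← ENNReal.rpow_add _ _ hA0 hA, add_sub_cancel, ENNReal.rpow_one]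
    exact (ENNReal.mul_le_mul_iff_left (ENNReal.rpow_pos (pos_iff_ne_zero.2 hA0) hA).ne'
      (ENNReal.rpow_ne_top_of_ne_zero hA0 hA)).1 (hsplit.symm.trans_le h)

theorem rpow_eq_mul_rpow_sub_one (a : ℝ≥0∞) {p : ℝ} (hp : 1 < p) : a ^ p = a * a ^ (p - 1) := by
  conv_rhs => enter [1]; rw [← ENNReal.rpow_one a]
  rw [← ENNReal.rpow_add_of_nonneg _ _ zero_le_one (by linarith), add_sub_cancel]

theorem lintegral_rpow_le_of_forall_le {μ : Measure X} [SigmaFinite μ] {p : ℝ} (hp : 0 < p)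
    {G : X → ℝ≥0∞} {R : ℝ≥0∞}
    (h : ∀ g : X → ℝ≥0∞, Measurable g → (∀ x, g x ≤ G x) → ∫⁻ x, g x ^ p ∂μ ≠ ∞ →
      (∫⁻ x, g x ^ p ∂μ) ^ (1 / p) ≤ R) :
    (∫⁻ x, G x ^ p ∂μ) ^ (1 / p) ≤ R := by
  have root_rpow (a : ℝ≥0∞) : (a ^ (1 / p)) ^ p = a := by
    rw [← ENNReal.rpow_mul, one_div_mul_cancel hp.ne', ENNReal.rpow_one]
  by_contra! hlt
  have hlt' : R ^ p < ∫⁻ x, G x ^ p ∂μ := by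
    simpa only [root_rpow] using ENNReal.rpow_lt_rpow hlt hp
  rw [lintegral_eq_nnreal] at hlt'
  obtain ⟨φ, hφG, hφ⟩ := by simpa only [lt_iSup_iff] using hlt'
  rw [← SimpleFunc.lintegral_eq_lintegral] at hφ
  obtain ⟨ψ, hψφ, hψtop, hψ⟩ := SimpleFunc.exists_lt_lintegral_simpleFunc_of_lt_lintegral hφ
  let g : X → ℝ≥0∞ := fun x => (ψ x : ℝ≥0∞) ^ (1 / p)
  have hg : ∫⁻ x, g x ^ p ∂μ = ∫⁻ x, ψ x ∂μ := by simp only [g, root_rpow]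
  refine absurd (h g (ψ.measurable.coe_nnreal_ennreal.pow_const _) (fun x => ?_) ?_) (not_le.2 ?_)
  · have hψG : (ψ x : ℝ≥0∞) ≤ G x ^ p := (ENNReal.coe_le_coe.2 (hψφ x)).trans (hφG x)
    exact (one_div p ▸ ENNReal.rpow_inv_le_iff hp).2 hψG
  · rw [hg]; exact hψtop.ne
  · rw [hg, one_div]; exact (ENNReal.lt_rpow_inv_iff hp).2 hψ

theorem minkowski_lintegral_of_le {μ : Measure X} {ν : Measure Y} [SFinite μ] [SFinite ν]
    {p : ℝ} (hp : 1 < p) {f : Y → X → ℝ≥0∞} (hf : Measurable (Function.uncurry f))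
    {g : X → ℝ≥0∞} (hg : Measurable g) (hgf : ∀ x, g x ≤ ∫⁻ y, f y x ∂ν)
    (hgp : ∫⁻ x, g x ^ p ∂μ ≠ ∞) :
    (∫⁻ x, g x ^ p ∂μ) ^ (1 / p) ≤ ∫⁻ y, (∫⁻ x, f y x ^ p ∂μ) ^ (1 / p) ∂ν := by
  have hpq := Real.HolderConjugate.conjExponent hp
  have hconj : 1 / p.conjExponent = 1 - 1 / p := by
    rw [one_div, one_div, hpq.one_sub_inv]
  refine rpow_one_div_le_of_le_mul_rpow (by linarith) hgp ?_
  calc ∫⁻ x, g x ^ p ∂μ ≤ ∫⁻ x, (∫⁻ y, f y x * g x ^ (p - 1) ∂ν) ∂μ := by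
        refine lintegral_mono fun x => ?_
        rw [lintegral_mul_const _ hf.of_uncurry_right, rpow_eq_mul_rpow_sub_one _ hp]
        gcongr
        exact hgf x
    _ = ∫⁻ y, (∫⁻ x, f y x * g x ^ (p - 1) ∂μ) ∂ν :=
        lintegral_lintegral_swap ((hf.comp measurable_swap).mul
          ((hg.pow_const _).comp measurable_fst)).aemeasurable
    _ ≤ ∫⁻ y, (∫⁻ x, f y x ^ p ∂μ) ^ (1 / p) * (∫⁻ x, g x ^ p ∂μ) ^ (1 - 1 / p) ∂ν := by
        refine lintegral_mono fun y => ?_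
        rw [← hconj]
        exact ENNReal.lintegral_mul_rpow_le_lintegral_rpow_mul_lintegral_rpow hpq
          hf.of_uncurry_left.aemeasurable hg.aemeasurable
    _ = _ := lintegral_mul_const _ ((hf.pow_const p).lintegral_prod_right'.pow_const _)

theorem minkowski_lintegral (μ : Measure X) (ν : Measure Y) [SigmaFinite μ] [SFinite ν] {p : ℝ}
    (hp : 1 < p) {f : Y → X → ℝ≥0∞} (hf : Measurable (Function.uncurry f)) :
    (∫⁻ x, (∫⁻ y, f y x ∂ν) ^ p ∂μ) ^ (1 / p) ≤ ∫⁻ y, (∫⁻ x, f y x ^ p ∂μ) ^ (1 / p) ∂ν :=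
  lintegral_rpow_le_of_forall_le (by linarith) fun _ hg hgf =>
    minkowski_lintegral_of_le hp hf hg hgf

end Lp

/-- A Banach function norm on nonnegative measurable functions on `Ω`, with the measurability and
the integral form of the triangle inequality that iterated norms call for. -/
structure FunctionNorm (Ω : Type) [MeasurableSpace Ω] where
  toFun : (Ω → ℝ≥0∞) → ℝ≥0∞
  mono : ∀ {f g : Ω → ℝ≥0∞}, (∀ ω, f ω ≤ g ω) → toFun f ≤ toFun g
  map_const_mul : ∀ {c : ℝ≥0∞} (f : Ω → ℝ≥0∞), c ≠ ∞ → toFun (fun ω => c * f ω) = c * toFun f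
  measurable_comp : ∀ {Y : Type} [MeasurableSpace Y] {f : Y → Ω → ℝ≥0∞},
    Measurable (Function.uncurry f) → Measurable fun y => toFun (f y)
  map_lintegral_le : ∀ {Y : Type} [MeasurableSpace Y] (ν : Measure Y) [SFinite ν]
    {f : Y → Ω → ℝ≥0∞}, Measurable (Function.uncurry f) →
      toFun (fun ω => ∫⁻ y, f y ω ∂ν) ≤ ∫⁻ y, toFun (f y) ∂ν
  map_iSup_le : ∀ {f : ℕ → Ω → ℝ≥0∞}, (∀ n, Measurable (f n)) → Monotone f →
    toFun (fun ω => ⨆ n, f n ω) ≤ ⨆ n, toFun (f n)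

namespace FunctionNorm

variable {Ω Ω' X : Type} [MeasurableSpace Ω] [MeasurableSpace Ω'] [MeasurableSpace X]

instance : CoeFun (FunctionNorm Ω) fun _ => (Ω → ℝ≥0∞) → ℝ≥0∞ := ⟨toFun⟩

theorem map_tsum_le (ρ : FunctionNorm Ω) {ι : Type} [Countable ι] {f : ι → Ω → ℝ≥0∞}
    (hf : ∀ i, Measurable (f i)) : ρ (fun ω => ∑' i, f i ω) ≤ ∑' i, ρ (f i) := by
  let _ : MeasurableSpace ι := ⊤
  have _ : MeasurableSingletonClass ι := ⟨fun _ => trivial⟩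
  simpa only [lintegral_count] using
    ρ.map_lintegral_le (Measure.count : Measure ι) (measurable_from_prod_countable_right hf)

theorem map_add_le (ρ : FunctionNorm Ω) {f g : Ω → ℝ≥0∞} (hf : Measurable f) (hg : Measurable g) :
    ρ (fun ω => f ω + g ω) ≤ ρ f + ρ g := by
  simpa only [tsum_bool, cond_false, cond_true] using
    ρ.map_tsum_le (f := fun b : Bool => cond b g f) (Bool.forall_bool.2 ⟨hf, hg⟩)

theorem map_zero (ρ : FunctionNorm Ω) : ρ (fun _ => 0) = 0 := by
  simpa only [zero_mul] using ρ.map_const_mul (fun _ => 0) ENNReal.zero_ne_top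

/-- The absolute value on scalars, viewed as functions on a point: the base case from which the
iterated norms are built. -/
def scalar : FunctionNorm Unit where
  toFun f := f ()
  mono h := h ()
  map_const_mul _ _ := rfl
  measurable_comp hf := hf.of_uncurry_right
  map_lintegral_le _ _ _ _ := le_rfl
  map_iSup_le _ _ := le_rfl

/-- The norm of the Bochner-type space `L^p(μ; ρ)`, on functions on the product `X × Ω`. -/
def Lp (μ : Measure X) [SigmaFinite μ] (p : ℝ) (hp : 1 < p) (ρ : FunctionNorm Ω) :
    FunctionNorm (X × Ω) where
  toFun f := (∫⁻ x, ρ (fun ω => f (x, ω)) ^ p ∂μ) ^ (1 / p)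
  mono h := by
    gcongr with x
    exact ρ.mono fun ω => h _
  map_const_mul {c} f hc := by
    have hp0 : 0 < p := by linarith
    simp_rw [fun x => ρ.map_const_mul (fun ω => f (x, ω)) hc, ENNReal.mul_rpow_of_nonneg _ _ hp0.le]
    rw [lintegral_const_mul' _ _ (ENNReal.rpow_ne_top_of_nonneg hp0.le hc),
      ENNReal.mul_rpow_of_nonneg _ _ (by positivity), ← ENNReal.rpow_mul,
      mul_one_div_cancel hp0.ne', ENNReal.rpow_one]
  measurable_comp {Y} _ f hf := by
    have hρ : Measurable fun z : Y × X => ρ fun ω => f z.1 (z.2, ω) :=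
      ρ.measurable_comp (hf.comp (by fun_prop :
        Measurable fun a : (Y × X) × Ω => (a.1.1, (a.1.2, a.2))))
    exact (hρ.pow_const p).lintegral_prod_right'.pow_const _
  map_lintegral_le {Y} _ ν _ f hf := by
    refine le_trans ?_ (minkowski_lintegral μ ν hp (f := fun y x => ρ fun ω => f y (x, ω))
      (ρ.measurable_comp (hf.comp (by fun_prop :
        Measurable fun a : (Y × X) × Ω => (a.1.1, (a.1.2, a.2))))))
    gcongr with x
    exact ρ.map_lintegral_le ν (hf.comp (by fun_prop : Measurable fun a : Y × Ω => (a.1, (x, a.2))))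
  map_iSup_le {f} hf hmono := by
    have hp0 : 0 < p := by linarith
    have hslice (x : X) : ρ (fun ω => ⨆ n, f n (x, ω)) ^ p ≤ ⨆ n, ρ (fun ω => f n (x, ω)) ^ p :=
      (ENNReal.rpow_le_rpow (ρ.map_iSup_le (fun n => (hf n).comp measurable_prodMk_left)
        fun n m h ω => hmono h _) hp0.le).trans_eq ((ENNReal.orderIsoRpow p hp0).map_iSup _)
    refine (ENNReal.rpow_le_rpow (lintegral_mono hslice) (by positivity)).trans_eq ?_
    rw [lintegral_iSup]
    · exact (ENNReal.orderIsoRpow (1 / p) (by positivity)).map_iSup _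
    · exact fun n => (ρ.measurable_comp (f := fun x ω => f n (x, ω)) (hf n)).pow_const _
    · exact fun n m h x => ENNReal.rpow_le_rpow (ρ.mono fun ω => hmono h _) hp0.le

/-- The pullback along `φ : Ω → Ω'` of a norm on `Ω` with weight `w`. -/
def weightedComap (ρ : FunctionNorm Ω) {w : Ω → ℝ≥0∞} (hw : Measurable w) (hw_top : ∀ ω, w ω ≠ ∞)
    {φ : Ω → Ω'} (hφ : Measurable φ) : FunctionNorm Ω' where
  toFun f := ρ fun ω => w ω * f (φ ω)
  mono h := ρ.mono fun ω => mul_le_mul_right (h _) _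
  map_const_mul {c} f hc := by
    simp only [← ρ.map_const_mul _ hc, mul_left_comm]
  measurable_comp hf := ρ.measurable_comp <| (hw.comp measurable_snd).mul
    (hf.comp (measurable_fst.prodMk (hφ.comp measurable_snd)))
  map_lintegral_le ν _ f hf := by
    simp only [← lintegral_const_mul' _ _ (hw_top _)]
    exact ρ.map_lintegral_le ν ((hw.comp measurable_snd).mul
      (hf.comp (measurable_fst.prodMk (hφ.comp measurable_snd))))
  map_iSup_le {f} hf hmono := by
    simp only [ENNReal.mul_iSup]
    exact ρ.map_iSup_le (fun n => hw.mul ((hf n).comp hφ))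
      fun n m h ω => mul_le_mul_right (hmono h _) _

end FunctionNorm

theorem setLIntegral_eq_tsum_fiber {X ι : Type*} [MeasurableSpace X] [Countable ι]
    [MeasurableSpace ι] [MeasurableSingletonClass ι] {μ : Measure X} {τ : X → ι}
    (hτ : Measurable τ) {A : Set X} (hA : MeasurableSet A) (g : X → ℝ≥0∞) :
    ∫⁻ x in A, g x ∂μ = ∑' i, ∫⁻ x in A ∩ τ ⁻¹' {i}, g x ∂μ := by
  conv_lhs => rw [← Set.inter_univ A, ← Set.preimage_univ (f := τ), ← Set.iUnion_of_singleton ι,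
    Set.preimage_iUnion, Set.inter_iUnion]
  refine lintegral_iUnion (fun i => hA.inter (hτ (measurableSet_singleton i)))
    (fun a b hab => ?_) g
  exact (Disjoint.preimage _ (Set.disjoint_singleton.2 hab)).mono Set.inter_subset_right
    Set.inter_subset_right

/-- An increasing sequence of countable partitions of a measure space into cells of finite
measure, each of which has at least half the measure of its parent. The cell of level `n` containing
`x` is recorded by an integer label `idx n x`. -/
structure DyadicFiltration {X : Type} [MeasurableSpace X] (μ : Measure X) where
  idx : ℕ → X → ℤ
  measurable_idx : ∀ n, Measurable (idx n)
  idx_eq_of_succ : ∀ n {x y}, idx (n + 1) x = idx (n + 1) y → idx n x = idx n y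
  measure_ne_top : ∀ n x, μ (idx n ⁻¹' {idx n x}) ≠ ∞
  measure_le_two_mul : ∀ n x,
    μ (idx n ⁻¹' {idx n x}) ≤ 2 * μ (idx (n + 1) ⁻¹' {idx (n + 1) x})

namespace DyadicFiltration

section Basic

variable {X Ω : Type} [MeasurableSpace X] [MeasurableSpace Ω] {μ : Measure X}
  (G : DyadicFiltration μ)

theorem idx_eq_of_le {n m : ℕ} (h : n ≤ m) {x y : X} (hxy : G.idx m x = G.idx m y) :
    G.idx n x = G.idx n y := by
  induction m, h using Nat.le_induction with
  | base => exact hxy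
  | succ k _ ih => exact ih (G.idx_eq_of_succ k hxy)

/-- The element of the `n`-th partition that contains `x`. -/
def cell (n : ℕ) (x : X) : Set X := G.idx n ⁻¹' {G.idx n x}

/-- The conditional expectation of `g` given the `n`-th partition. -/
def avg (n : ℕ) (g : X → ℝ≥0∞) (x : X) : ℝ≥0∞ := ⨍⁻ s in G.cell n x, g s ∂μ

/-- The dyadic maximal function truncated to the levels below `L`. -/
def maximal (L : ℕ) (g : X → ℝ≥0∞) (x : X) : ℝ≥0∞ := ⨆ (n : ℕ) (_ : n < L), G.avg n g x

/-- `A` is a union of cells of level `n`. -/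
def IsSaturated (n : ℕ) (A : Set X) : Prop := ∀ ⦃x y⦄, G.idx n x = G.idx n y → x ∈ A → y ∈ A

variable {G}

theorem IsSaturated.mono {n m : ℕ} {A : Set X} (hA : G.IsSaturated n A) (hnm : n ≤ m) :
    G.IsSaturated m A := fun _ _ hxy => hA (G.idx_eq_of_le hnm hxy)

theorem IsSaturated.inter {n : ℕ} {A B : Set X} (hA : G.IsSaturated n A)
    (hB : G.IsSaturated n B) : G.IsSaturated n (A ∩ B) :=
  fun _ _ hxy hx => ⟨hA hxy hx.1, hB hxy hx.2⟩

theorem IsSaturated.diff {n : ℕ} {A B : Set X} (hA : G.IsSaturated n A)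
    (hB : G.IsSaturated n B) : G.IsSaturated n (A \ B) :=
  fun _ _ hxy hx => ⟨hA hxy hx.1, fun hy => hx.2 (hB hxy.symm hy)⟩

theorem isSaturated_preimage (n : ℕ) (I : Set ℤ) : G.IsSaturated n (G.idx n ⁻¹' I) :=
  fun _ _ hxy hx => by rwa [Set.mem_preimage, ← hxy]

theorem IsSaturated.measurableSet {n : ℕ} {A : Set X} (hA : G.IsSaturated n A) :
    MeasurableSet A := by
  have hpre : A = G.idx n ⁻¹' (G.idx n '' A) := by
    refine (Set.subset_preimage_image _ _).antisymm ?_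
    rintro y ⟨x, hx, hxy⟩
    exact hA hxy hx
  rw [hpre]
  exact G.measurable_idx n .of_discrete

theorem cell_congr {n : ℕ} {x y : X} (h : G.idx n x = G.idx n y) : G.cell n x = G.cell n y := by
  rw [cell, cell, h]

theorem measurableSet_cell (n : ℕ) (x : X) : MeasurableSet (G.cell n x) :=
  G.measurable_idx n (measurableSet_singleton _)

theorem avg_congr {n : ℕ} {x y : X} (h : G.idx n x = G.idx n y) (g : X → ℝ≥0∞) :
    G.avg n g x = G.avg n g y := by
  rw [avg, avg, cell_congr h]

theorem avg_const_mul {c : ℝ≥0∞} (hc : c ≠ ∞) (n : ℕ) (g : X → ℝ≥0∞) (x : X) :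
    G.avg n (fun s => c * g s) x = c * G.avg n g x := by
  rw [avg, avg, setLAverage_eq, setLAverage_eq, lintegral_const_mul' _ _ hc, mul_div_assoc]

theorem avg_succ_le (n : ℕ) (g : X → ℝ≥0∞) (x : X) : G.avg (n + 1) g x ≤ 2 * G.avg n g x := by
  have hsub : G.cell (n + 1) x ⊆ G.cell n x := fun y hy => G.idx_eq_of_succ n hy
  have hinv : (μ (G.cell (n + 1) x))⁻¹ ≤ 2 * (μ (G.cell n x))⁻¹ := by
    rw [ENNReal.inv_le_iff_inv_le, ENNReal.mul_inv (.inl two_ne_zero) (.inl ofNat_ne_top), inv_inv,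
      mul_comm, ← div_eq_mul_inv]
    exact ENNReal.div_le_of_le_mul' (G.measure_le_two_mul n x)
  simp only [avg, setLAverage_eq, div_eq_mul_inv]
  calc (∫⁻ s in G.cell (n + 1) x, g s ∂μ) * (μ (G.cell (n + 1) x))⁻¹
      ≤ (∫⁻ s in G.cell n x, g s ∂μ) * (2 * (μ (G.cell n x))⁻¹) := by gcongr
    _ = 2 * ((∫⁻ s in G.cell n x, g s ∂μ) * (μ (G.cell n x))⁻¹) := by rw [mul_left_comm]

theorem avg_le_maximal {n L : ℕ} (h : n < L) (g : X → ℝ≥0∞) (x : X) :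
    G.avg n g x ≤ G.maximal L g x :=
  le_iSup₂_of_le n h le_rfl

theorem lt_maximal_iff {L : ℕ} {l : ℝ≥0∞} {g : X → ℝ≥0∞} {x : X} :
    l < G.maximal L g x ↔ ∃ n < L, l < G.avg n g x := by
  simp only [maximal, lt_iSup_iff, exists_prop]

theorem maximal_mono_left {L L' : ℕ} (h : L ≤ L') (g : X → ℝ≥0∞) (x : X) :
    G.maximal L g x ≤ G.maximal L' g x :=
  iSup₂_le fun _ hn => avg_le_maximal (hn.trans_le h) g x

theorem maximal_congr {n L : ℕ} (hL : L ≤ n + 1) {x y : X} (h : G.idx n x = G.idx n y)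
    (g : X → ℝ≥0∞) : G.maximal L g x = G.maximal L g y :=
  iSup_congr fun _ => iSup_congr fun _ => avg_congr (G.idx_eq_of_le (by omega) h) g

theorem maximal_const_mul {c : ℝ≥0∞} (hc : c ≠ ∞) (L : ℕ) (g : X → ℝ≥0∞) (x : X) :
    G.maximal L (fun s => c * g s) x = c * G.maximal L g x := by
  simp only [maximal, ENNReal.mul_iSup, avg_const_mul hc]

theorem measurable_uncurry_avg [SFinite μ] (n : ℕ) {f : X → Ω → ℝ≥0∞}
    (hf : Measurable (Function.uncurry f)) :
    Measurable (Function.uncurry fun x ω => G.avg n (f · ω) x) := by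
  have hlabel : Measurable fun z : ℤ × Ω => ⨍⁻ s in G.idx n ⁻¹' {z.1}, f s z.2 ∂μ :=
    measurable_from_prod_countable_right fun m => by
      simpa only [setLAverage_eq, Function.uncurry_apply_pair] using
        (Measurable.lintegral_prod_left' (μ := μ.restrict (G.idx n ⁻¹' {m})) hf).div_const _
  exact hlabel.comp (f := fun z : X × Ω => (G.idx n z.1, z.2))
    (((G.measurable_idx n).comp measurable_fst).prodMk measurable_snd)

theorem measurable_uncurry_maximal [SFinite μ] (L : ℕ) {f : X → Ω → ℝ≥0∞}
    (hf : Measurable (Function.uncurry f)) :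
    Measurable (Function.uncurry fun x ω => G.maximal L (f · ω) x) :=
  .iSup fun n => .iSup fun _ => measurable_uncurry_avg n hf

theorem measurable_norm_maximal [SFinite μ] (ρ : FunctionNorm Ω) (L : ℕ) {f : X → Ω → ℝ≥0∞}
    (hf : Measurable (Function.uncurry f)) :
    Measurable fun x => ρ fun ω => G.maximal L (f · ω) x :=
  ρ.measurable_comp (measurable_uncurry_maximal L hf)

theorem norm_avg_le [SFinite μ] (ρ : FunctionNorm Ω) (n : ℕ) {f : X → Ω → ℝ≥0∞}
    (hf : Measurable (Function.uncurry f)) (x : X) :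
    ρ (fun ω => G.avg n (f · ω) x) ≤ G.avg n (fun s => ρ (f s)) x :=
  ρ.map_lintegral_le _ hf

theorem norm_maximal_mono_left (ρ : FunctionNorm Ω) (f : X → Ω → ℝ≥0∞) (x : X) :
    Monotone fun L => ρ fun ω => G.maximal L (f · ω) x :=
  fun _ _ h => ρ.mono fun ω => maximal_mono_left h (f · ω) x

theorem norm_maximal_zero (ρ : FunctionNorm Ω) (f : X → Ω → ℝ≥0∞) (x : X) :
    ρ (fun ω => G.maximal 0 (f · ω) x) = 0 := by
  simpa [maximal] using ρ.map_zero

theorem avg_indicator {n k : ℕ} (hnk : n ≤ k) {A : Set X} (hA : G.IsSaturated n A)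
    {x : X} (hx : x ∈ A) (g : X → ℝ≥0∞) : G.avg k (A.indicator g) x = G.avg k g x :=
  setLAverage_congr_fun (G.measurableSet_cell k x) fun _ hs =>
    Set.indicator_of_mem (hA (G.idx_eq_of_le hnk (Eq.symm hs)) hx) g

theorem setLIntegral_avg {n : ℕ} {A : Set X} (hA : G.IsSaturated n A) (g : X → ℝ≥0∞) :
    ∫⁻ x in A, G.avg n g x ∂μ = ∫⁻ x in A, g x ∂μ := by
  rw [setLIntegral_eq_tsum_fiber (G.measurable_idx n) hA.measurableSet,
    setLIntegral_eq_tsum_fiber (G.measurable_idx n) hA.measurableSet]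
  refine tsum_congr fun m => ?_
  rcases (A ∩ G.idx n ⁻¹' {m}).eq_empty_or_nonempty with hempty | ⟨x, hx, rfl⟩
  · rw [hempty, setLIntegral_empty, setLIntegral_empty]
  have hcell : A ∩ G.idx n ⁻¹' {G.idx n x} = G.cell n x :=
    Set.inter_eq_right.2 fun y hy => hA (Eq.symm hy) hx
  have hconst : Set.EqOn (G.avg n g) (fun _ => G.avg n g x) (G.cell n x) :=
    fun y hy => avg_congr hy g
  rw [hcell, setLIntegral_congr_fun (G.measurableSet_cell n x) hconst, setLIntegral_const, mul_comm]
  exact measure_mul_setLAverage g (G.measure_ne_top n x)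

end Basic

section Stopping

variable {X Ω : Type} [MeasurableSpace X] [MeasurableSpace Ω] {μ : Measure X}
  (G : DyadicFiltration μ)

/-- `τ` is a stopping time for the dyadic filtration. -/
def IsStopping (τ : X → ℕ) : Prop := ∀ k, G.IsSaturated k (τ ⁻¹' {k})

/-- The first level below `L` at which the average of `φ` exceeds `l`, and `L` if there is none. -/
def firstPassage (φ : X → ℝ≥0∞) (l : ℝ≥0∞) (L : ℕ) (x : X) : ℕ :=
  sInf {n | l < G.avg n φ x ∨ L ≤ n}

/-- The martingale of `g` stopped at `τ`, with the initial term removed where `τ = 0`. Removing it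
makes the stopped function bounded by twice the threshold when `τ` is a first passage time. -/
def stopped (τ : X → ℕ) (g : X → ℝ≥0∞) (x : X) : ℝ≥0∞ :=
  if τ x = 0 then 0 else G.avg (τ x) g x

variable {G}

theorem IsStopping.measurable {τ : X → ℕ} (hτ : G.IsStopping τ) : Measurable τ :=
  measurable_to_countable' fun k => (hτ k).measurableSet

theorem IsStopping.lt_of_idx_eq {τ : X → ℕ} (hτ : G.IsStopping τ) {n : ℕ} {x y : X}
    (hxy : G.idx n x = G.idx n y) (hx : n < τ x) : n < τ y := by
  by_contra! hy
  have : τ x = τ y := hτ (τ y) (G.idx_eq_of_le hy hxy.symm) rfl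
  omega

theorem IsStopping.setLIntegral_avg {τ : X → ℕ} (hτ : G.IsStopping τ) {A : Set X}
    (hA : ∀ k, G.IsSaturated k (A ∩ τ ⁻¹' {k})) (g : X → ℝ≥0∞) :
    ∫⁻ x in A, G.avg (τ x) g x ∂μ = ∫⁻ x in A, g x ∂μ := by
  have hAm : MeasurableSet A := by
    rw [← Set.inter_univ A, ← Set.preimage_univ (f := τ), ← Set.iUnion_of_singleton ℕ,
      Set.preimage_iUnion, Set.inter_iUnion]
    exact .iUnion fun k => (hA k).measurableSet
  rw [setLIntegral_eq_tsum_fiber hτ.measurable hAm, setLIntegral_eq_tsum_fiber hτ.measurable hAm]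
  refine tsum_congr fun k => ?_
  rw [← DyadicFiltration.setLIntegral_avg (hA k) g]
  exact setLIntegral_congr_fun (hA k).measurableSet fun x hx => by rw [show τ x = k from hx.2]

theorem avg_le_of_lt_firstPassage {φ : X → ℝ≥0∞} {l : ℝ≥0∞} {L n : ℕ} {x : X}
    (h : n < G.firstPassage φ l L x) : G.avg n φ x ≤ l :=
  not_lt.1 fun hn => Nat.notMem_of_lt_sInf h (Or.inl hn)

theorem lt_avg_firstPassage {φ : X → ℝ≥0∞} {l : ℝ≥0∞} {L : ℕ} {x : X}
    (h : G.firstPassage φ l L x < L) : l < G.avg (G.firstPassage φ l L x) φ x :=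
  (Nat.sInf_mem (s := {n | l < G.avg n φ x ∨ L ≤ n}) ⟨L, Or.inr le_rfl⟩).resolve_right h.not_ge

theorem lt_maximal_iff_firstPassage_lt {φ : X → ℝ≥0∞} {l : ℝ≥0∞} {L : ℕ} {x : X} :
    l < G.maximal L φ x ↔ G.firstPassage φ l L x < L := by
  refine ⟨fun h => ?_, fun h => (lt_avg_firstPassage h).trans_le (avg_le_maximal h φ x)⟩
  obtain ⟨n, hn, hln⟩ := lt_maximal_iff.1 h
  exact (Nat.sInf_le (Or.inl hln)).trans_lt hn

theorem isStopping_firstPassage (φ : X → ℝ≥0∞) (l : ℝ≥0∞) (L : ℕ) :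
    G.IsStopping (G.firstPassage φ l L) := by
  rintro k x y hxy rfl
  have hmem (j : ℕ) (hj : j ≤ G.firstPassage φ l L x) :
      j ∈ {n | l < G.avg n φ y ∨ L ≤ n} ↔ j ∈ {n | l < G.avg n φ x ∨ L ≤ n} := by
    rw [Set.mem_ofPred_eq, Set.mem_ofPred_eq, avg_congr (G.idx_eq_of_le hj hxy)]
  have hx := Nat.sInf_mem (s := {n | l < G.avg n φ x ∨ L ≤ n}) ⟨L, Or.inr le_rfl⟩
  refine le_antisymm (Nat.sInf_le ((hmem _ le_rfl).2 hx)) (le_of_not_gt fun h => ?_)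
  exact Nat.notMem_of_lt_sInf h
    ((hmem _ h.le).1 (Nat.sInf_mem ⟨L, Or.inr le_rfl⟩))

theorem mul_meas_lt_maximal_le (φ : X → ℝ≥0∞) (L : ℕ) (l : ℝ≥0∞) :
    l * μ {x | l < G.maximal L φ x} ≤ ∫⁻ x, φ x ∂μ := by
  set τ := G.firstPassage φ l L
  have hτ : G.IsStopping τ := isStopping_firstPassage φ l L
  have hset : {x | l < G.maximal L φ x} = τ ⁻¹' Set.Iio L :=
    Set.ext fun x => lt_maximal_iff_firstPassage_lt
  have hA (k : ℕ) : G.IsSaturated k (τ ⁻¹' Set.Iio L ∩ τ ⁻¹' {k}) := by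
    rintro x y hxy ⟨hxL, rfl⟩
    have hy : τ y = τ x := hτ (τ x) hxy rfl
    exact ⟨hy.trans_lt hxL, hy⟩
  calc l * μ {x | l < G.maximal L φ x} = ∫⁻ _ in τ ⁻¹' Set.Iio L, l ∂μ := by
        rw [hset, setLIntegral_const]
    _ ≤ ∫⁻ x in τ ⁻¹' Set.Iio L, G.avg (τ x) φ x ∂μ :=
        setLIntegral_mono' (hτ.measurable .of_discrete) fun x hx => (lt_avg_firstPassage hx).le
    _ = ∫⁻ x in τ ⁻¹' Set.Iio L, φ x ∂μ := hτ.setLIntegral_avg hA φ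
    _ ≤ ∫⁻ x, φ x ∂μ := setLIntegral_le_lintegral _ _

theorem measurable_uncurry_stopped [SFinite μ] {τ : X → ℕ} (hτ : Measurable τ)
    {f : X → Ω → ℝ≥0∞} (hf : Measurable (Function.uncurry f)) :
    Measurable (Function.uncurry fun x ω => G.stopped τ (f · ω) x) := by
  refine Measurable.ite ((hτ.comp measurable_fst) (measurableSet_singleton 0)) measurable_const ?_
  have hlevel : Measurable fun z : ℕ × (X × Ω) => G.avg z.1 (f · z.2.2) z.2.1 :=
    measurable_from_prod_countable_right fun n => measurable_uncurry_avg n hf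
  exact hlevel.comp (f := fun z : X × Ω => (τ z.1, z))
    ((hτ.comp measurable_fst).prodMk measurable_id)

theorem norm_stopped_le_avg [SFinite μ] (ρ : FunctionNorm Ω) (τ : X → ℕ) {f : X → Ω → ℝ≥0∞}
    (hf : Measurable (Function.uncurry f)) (x : X) :
    ρ (fun ω => G.stopped τ (f · ω) x) ≤ G.avg (τ x) (fun s => ρ (f s)) x := by
  by_cases h0 : τ x = 0
  · simp only [stopped, if_pos h0, ρ.map_zero, zero_le]
  · simpa only [stopped, if_neg h0] using norm_avg_le ρ (τ x) hf x

theorem norm_stopped_firstPassage_le [SFinite μ] (ρ : FunctionNorm Ω) {f : X → Ω → ℝ≥0∞}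
    (hf : Measurable (Function.uncurry f)) (l : ℝ≥0∞) (L : ℕ) (x : X) :
    ρ (fun ω => G.stopped (G.firstPassage (fun s => ρ (f s)) l L) (f · ω) x) ≤ 2 * l := by
  rcases hm : G.firstPassage (fun s => ρ (f s)) l L x with _ | m
  · simp only [stopped, if_pos hm, ρ.map_zero, zero_le]
  · have hlt : m < G.firstPassage (fun s => ρ (f s)) l L x := by omega
    refine (norm_stopped_le_avg ρ _ hf x).trans ?_
    rw [hm]
    exact (avg_succ_le m _ x).trans (mul_le_mul_right (avg_le_of_lt_firstPassage hlt) 2)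

theorem IsStopping.lintegral_norm_stopped_le [SFinite μ] (ρ : FunctionNorm Ω) {τ : X → ℕ}
    (hτ : G.IsStopping τ) {f : X → Ω → ℝ≥0∞} (hf : Measurable (Function.uncurry f)) :
    ∫⁻ x, ρ (fun ω => G.stopped τ (f · ω) x) ∂μ ≤ ∫⁻ x, ρ (f x) ∂μ := by
  refine (lintegral_mono (norm_stopped_le_avg ρ τ hf)).trans_eq ?_
  simpa only [setLIntegral_univ] using hτ.setLIntegral_avg (A := Set.univ)
    (fun k => by simpa only [Set.univ_inter] using hτ k) fun x => ρ (f x)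

theorem IsStopping.avg_stopped {τ : X → ℕ} (hτ : G.IsStopping τ) {n : ℕ} {x : X} (hn : n < τ x)
    (g : X → ℝ≥0∞) : G.avg n (G.stopped τ g) x = G.avg n g x := by
  have hlt {y : X} (hy : y ∈ G.cell n x) : n < τ y := hτ.lt_of_idx_eq (Eq.symm hy) hn
  have hsat (k : ℕ) : G.IsSaturated k (G.cell n x ∩ τ ⁻¹' {k}) := by
    rintro y z hyz ⟨hy, rfl⟩
    exact ⟨(isSaturated_preimage n _).mono (hlt hy).le hyz hy, hτ (τ y) hyz rfl⟩
  have hstopped : Set.EqOn (G.stopped τ g) (fun y => G.avg (τ y) g y) (G.cell n x) :=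
    fun y hy => if_neg (Nat.ne_zero_of_lt (hlt hy))
  rw [avg, avg, setLAverage_eq, setLAverage_eq,
    setLIntegral_congr_fun (G.measurableSet_cell n x) hstopped, hτ.setLIntegral_avg hsat]

theorem IsStopping.maximal_stopped {τ : X → ℕ} (hτ : G.IsStopping τ) {L : ℕ} {x : X}
    (hL : L ≤ τ x) (g : X → ℝ≥0∞) : G.maximal L (G.stopped τ g) x = G.maximal L g x :=
  iSup_congr fun _ => iSup_congr fun hn => hτ.avg_stopped (hn.trans_le hL) g

end Stopping

section Bounds

variable {X Ω : Type} [MeasurableSpace X] [MeasurableSpace Ω] {μ : Measure X}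
  (G : DyadicFiltration μ)

/-- The weak type `(1, 1)` inequality with constant `C` for the dyadic maximal function of
functions with values in the space normed by `ρ`. -/
def WeakBound (ρ : FunctionNorm Ω) (C : ℝ≥0∞) : Prop :=
  ∀ ⦃f : X → Ω → ℝ≥0∞⦄, Measurable (Function.uncurry f) → ∀ (L : ℕ) (l : ℝ≥0∞),
    l * μ {x | l < ρ fun ω => G.maximal L (f · ω) x} ≤ C * ∫⁻ x, ρ (f x) ∂μ

/-- The strong type `(s, s)` inequality with constant `C` for the dyadic maximal function of
functions with values in the space normed by `ρ`. -/
def StrongBound (ρ : FunctionNorm Ω) (s : ℝ) (C : ℝ≥0∞) : Prop :=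
  ∀ ⦃f : X → Ω → ℝ≥0∞⦄, Measurable (Function.uncurry f) → ∀ L : ℕ,
    ∫⁻ x, ρ (fun ω => G.maximal L (f · ω) x) ^ s ∂μ ≤ C * ∫⁻ x, ρ (f x) ^ s ∂μ

variable {G}

theorem weakBound_scalar : G.WeakBound .scalar 1 := fun f _ L l => by
  rw [one_mul]
  exact mul_meas_lt_maximal_le (f · ()) L l

theorem StrongBound.mul_meas_le [SFinite μ] {ρ : FunctionNorm Ω} {s : ℝ} (hs : 1 < s) {C : ℝ≥0∞}
    (h : G.StrongBound ρ s C) {f : X → Ω → ℝ≥0∞} (hf : Measurable (Function.uncurry f))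
    {K l : ℝ≥0∞} (hl0 : l ≠ 0) (hl : l ≠ ∞) (hfK : ∀ x, ρ (f x) ≤ K * l) (L : ℕ) :
    l * μ {x | l ≤ ρ fun ω => G.maximal L (f · ω) x} ≤ C * K ^ (s - 1) * ∫⁻ x, ρ (f x) ∂μ := by
  have hs1 : 0 ≤ s - 1 := by linarith
  refine (ENNReal.mul_le_mul_iff_right (ENNReal.rpow_pos (pos_iff_ne_zero.2 hl0) hl).ne'
    (ENNReal.rpow_ne_top_of_nonneg hs1 hl)).1 ?_
  calc l ^ (s - 1) * (l * μ {x | l ≤ ρ fun ω => G.maximal L (f · ω) x})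
      = l ^ s * μ {x | l ≤ ρ fun ω => G.maximal L (f · ω) x} := by
        rw [rpow_eq_mul_rpow_sub_one l hs, ← mul_assoc, mul_comm l]
    _ ≤ l ^ s * μ {x | l ^ s ≤ ρ (fun ω => G.maximal L (f · ω) x) ^ s} := by
        refine mul_le_mul_right (measure_mono fun x hx => ?_) _
        exact ENNReal.rpow_le_rpow hx (by linarith)
    _ ≤ ∫⁻ x, ρ (fun ω => G.maximal L (f · ω) x) ^ s ∂μ :=
        mul_meas_ge_le_lintegral ((measurable_norm_maximal ρ L hf).pow_const s) _
    _ ≤ C * ∫⁻ x, ρ (f x) ^ s ∂μ := h hf L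
    _ ≤ C * ∫⁻ x, (K * l) ^ (s - 1) * ρ (f x) ∂μ := by
        gcongr with x
        rw [rpow_eq_mul_rpow_sub_one _ hs, mul_comm]
        gcongr
        exact hfK x
    _ = l ^ (s - 1) * (C * K ^ (s - 1) * ∫⁻ x, ρ (f x) ∂μ) := by
        rw [lintegral_const_mul _ (ρ.measurable_comp hf), ENNReal.mul_rpow_of_nonneg _ _ hs1]
        ring

/-- Gundy's decomposition: off the set where an average of `ρ ∘ f` exceeds `l`, the maximal function
of `f` is that of the stopped function, whose norm is at most `2 * l`. -/
theorem StrongBound.weakBound [SFinite μ] {ρ : FunctionNorm Ω} {s : ℝ} (hs : 1 < s) {C : ℝ≥0∞}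
    (h : G.StrongBound ρ s C) : G.WeakBound ρ (1 + C * 2 ^ (s - 1)) := by
  intro f hf L l
  rcases eq_or_ne l 0 with rfl | hl0
  · simp only [zero_mul, zero_le]
  rcases eq_or_ne l ∞ with rfl | hl
  · simp only [not_top_lt, Set.ofPred_false, measure_empty, mul_zero, zero_le]
  set φ : X → ℝ≥0∞ := fun x => ρ (f x)
  set τ := G.firstPassage φ l L
  have hτ : G.IsStopping τ := isStopping_firstPassage φ l L
  have hcover : {x | l < ρ fun ω => G.maximal L (f · ω) x} ⊆ {x | l < G.maximal L φ x} ∪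
      {x | l ≤ ρ fun ω => G.maximal L (G.stopped τ (f · ω)) x} := by
    intro x (hx : l < _)
    refine or_iff_not_imp_left.2 fun hxφ => ?_
    have hL : L ≤ τ x := not_lt.1 (lt_maximal_iff_firstPassage_lt.not.1 hxφ)
    simpa only [Set.mem_ofPred_eq, hτ.maximal_stopped hL] using hx.le
  calc l * μ {x | l < ρ fun ω => G.maximal L (f · ω) x}
      ≤ l * μ {x | l < G.maximal L φ x} +
        l * μ {x | l ≤ ρ fun ω => G.maximal L (G.stopped τ (f · ω)) x} := by
        rw [← mul_add]
        gcongr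
        exact (measure_mono hcover).trans (measure_union_le _ _)
    _ ≤ ∫⁻ x, φ x ∂μ + C * 2 ^ (s - 1) * ∫⁻ x, φ x ∂μ := by
        refine add_le_add (mul_meas_lt_maximal_le φ L l) ((h.mul_meas_le hs
          (measurable_uncurry_stopped hτ.measurable hf) hl0 hl
          (norm_stopped_firstPassage_le ρ hf l L) L).trans ?_)
        exact mul_le_mul_right (hτ.lintegral_norm_stopped_le ρ hf) _
    _ = (1 + C * 2 ^ (s - 1)) * ∫⁻ x, φ x ∂μ := by rw [add_mul, one_mul]

end Bounds

end DyadicFiltration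

section GoodLambda

variable {X : Type*} [MeasurableSpace X] {μ ν : Measure X} {k F φ : X → ℝ≥0∞} {C : ℝ≥0∞} {s : ℝ}

theorem lintegral_rpow_eq_lintegral_meas_ofReal_lt_mul (hk : Measurable k) (hk_top : ∀ x, k x ≠ ∞)
    {p : ℝ} (hp : 0 < p) : ∫⁻ x, k x ^ p ∂μ =
      ENNReal.ofReal p * ∫⁻ l in Set.Ioi (0 : ℝ),
        μ {x | ENNReal.ofReal l < k x} * ENNReal.ofReal (l ^ (p - 1)) := by
  have hpow (x : X) : k x ^ p = ENNReal.ofReal ((k x).toReal ^ p) := by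
    rw [ENNReal.toReal_rpow, ENNReal.ofReal_toReal (ENNReal.rpow_ne_top_of_nonneg hp.le (hk_top x))]
  simp_rw [hpow]
  rw [lintegral_rpow_eq_lintegral_meas_lt_mul μ (.of_forall fun _ => ENNReal.toReal_nonneg)
    hk.ennreal_toReal.aemeasurable hp]
  congr 1
  refine setLIntegral_congr_fun measurableSet_Ioi fun l (hl : 0 < l) => ?_
  simp only [ENNReal.ofReal_lt_iff_lt_toReal hl.le (hk_top _)]

/-- The constant in the good-`λ` form of Doob's `L^s` inequality. -/
def doobConst (s : ℝ) (C : ℝ≥0∞) : ℝ≥0∞ :=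
  (2 ^ s * (ENNReal.ofReal s * C * (ENNReal.ofReal (s - 1))⁻¹)) ^ s

theorem doobConst_ne_top (hs : 1 < s) (hC : C ≠ ∞) : doobConst s C ≠ ∞ := by
  have hs0 : 0 ≤ s := by linarith
  have hs1 : (ENNReal.ofReal (s - 1))⁻¹ ≠ ∞ :=
    ENNReal.inv_ne_top.2 (ENNReal.ofReal_pos.2 (by linarith)).ne'
  exact ENNReal.rpow_ne_top_of_nonneg hs0 <| ENNReal.mul_ne_top
    (ENNReal.rpow_ne_top_of_nonneg hs0 ofNat_ne_top)
    (ENNReal.mul_ne_top (ENNReal.mul_ne_top ofReal_ne_top hC) hs1)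

theorem lintegral_rpow_le_of_meas_two_mul_lt_le (hs : 1 < s) (hk : Measurable k)
    (hk_top : ∀ x, k x ≠ ∞) (h : ∀ l : ℝ≥0∞, l * μ {x | 2 * l < k x} ≤ C * ν {x | l < k x}) :
    ∫⁻ x, k x ^ s ∂μ ≤ 2 ^ s * (ENNReal.ofReal s * C * (ENNReal.ofReal (s - 1))⁻¹) *
      ∫⁻ x, k x ^ (s - 1) ∂ν := by
  have hs0 : 0 < s := by linarith
  have hs1 : 0 < s - 1 := by linarith
  have hhalf (x : X) : k x ^ s = 2 ^ s * (k x / 2) ^ s := by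
    rw [← ENNReal.mul_rpow_of_nonneg _ _ hs0.le, ENNReal.mul_div_cancel two_ne_zero ofNat_ne_top]
  have hlevel (l : ℝ) (hl : 0 < l) :
      μ {x | ENNReal.ofReal l < k x / 2} * ENNReal.ofReal (l ^ (s - 1)) ≤
        C * (ν {x | ENNReal.ofReal l < k x} * ENNReal.ofReal (l ^ (s - 1 - 1))) := by
    have hset : {x | ENNReal.ofReal l < k x / 2} = {x | 2 * ENNReal.ofReal l < k x} :=
      Set.ext fun x => by
        simp only [Set.mem_ofPred_eq, ENNReal.lt_div_iff_mul_lt (.inl two_ne_zero)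
          (.inl ofNat_ne_top), mul_comm]
    have hpow : l ^ (s - 1) = l * l ^ (s - 1 - 1) := by
      rw [Real.rpow_sub_one hl.ne' (s - 1), mul_div_cancel₀ _ hl.ne']
    rw [hset, hpow, ENNReal.ofReal_mul hl.le, ← mul_assoc, mul_comm (μ _), ← mul_assoc]
    exact mul_le_mul_left (h _) _
  have hmeas : Measurable fun l : ℝ =>
      ν {x | ENNReal.ofReal l < k x} * ENNReal.ofReal (l ^ (s - 1 - 1)) := by
    refine Measurable.mul (Antitone.measurable fun a b hab => measure_mono fun x hx => ?_)
      (by fun_prop)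
    exact (ENNReal.ofReal_le_ofReal hab).trans_lt hx
  simp_rw [hhalf]
  rw [lintegral_const_mul _ ((hk.div_const 2).pow_const s), mul_assoc,
    lintegral_rpow_eq_lintegral_meas_ofReal_lt_mul (hk.div_const 2)
      (fun x => ENNReal.div_ne_top (hk_top x) two_ne_zero) hs0,
    lintegral_rpow_eq_lintegral_meas_ofReal_lt_mul hk hk_top hs1, mul_assoc (_ * C),
    ENNReal.inv_mul_cancel_left (ENNReal.ofReal_pos.2 hs1).ne' ofReal_ne_top, mul_assoc,
    ← lintegral_const_mul _ hmeas]
  gcongr 2 ^ s * (_ * ?_)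
  exact setLIntegral_mono' measurableSet_Ioi hlevel

theorem lintegral_rpow_le_doobConst_mul_of_ne_top (hs : 1 < s) (hk : Measurable k)
    (hk_top : ∀ x, k x ≠ ∞) (hk_int : ∫⁻ x, k x ^ s ∂μ ≠ ∞) (hφ : Measurable φ)
    (h : ∀ l : ℝ≥0∞, l * μ {x | 2 * l < k x} ≤ C * ∫⁻ x in {x | l < k x}, φ x ∂μ) :
    ∫⁻ x, k x ^ s ∂μ ≤ doobConst s C * ∫⁻ x, φ x ^ s ∂μ := by
  have hs0 : 0 < s := by linarith
  have hpq := Real.HolderConjugate.conjExponent hs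
  have hdensity : ∫⁻ x, k x ^ (s - 1) ∂μ.withDensity φ = ∫⁻ x, φ x * k x ^ (s - 1) ∂μ :=
    lintegral_withDensity_eq_lintegral_mul μ hφ (hk.pow_const _)
  have hholder : ∫⁻ x, φ x * k x ^ (s - 1) ∂μ ≤
      (∫⁻ x, φ x ^ s ∂μ) ^ (1 / s) * (∫⁻ x, k x ^ s ∂μ) ^ (1 - 1 / s) := by
    have hconj : 1 / s.conjExponent = 1 - 1 / s := by rw [one_div, one_div, hpq.one_sub_inv]
    rw [← hconj]
    exact ENNReal.lintegral_mul_rpow_le_lintegral_rpow_mul_lintegral_rpow hpq hφ.aemeasurable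
      hk.aemeasurable
  have hlayer := lintegral_rpow_le_of_meas_two_mul_lt_le (μ := μ) (C := C)
    (ν := μ.withDensity φ) hs hk hk_top fun l => by
      rw [withDensity_apply _ (measurableSet_lt measurable_const hk)]; exact h l
  rw [hdensity] at hlayer
  have habsorb := rpow_one_div_le_of_le_mul_rpow hs0 hk_int
    (hlayer.trans ((mul_le_mul_right hholder _).trans_eq (mul_assoc _ _ _).symm))
  simpa only [ENNReal.mul_rpow_of_nonneg _ _ hs0.le, ← ENNReal.rpow_mul,
    one_div_mul_cancel hs0.ne', ENNReal.rpow_one, doobConst]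
    using ENNReal.rpow_le_rpow habsorb hs0.le

theorem lintegral_rpow_le_doobConst_mul [IsFiniteMeasure μ] (hs : 1 < s) (hF : Measurable F)
    (hφ : Measurable φ)
    (h : ∀ l : ℝ≥0∞, l * μ {x | 2 * l < F x} ≤ C * ∫⁻ x in {x | l < F x}, φ x ∂μ) :
    ∫⁻ x, F x ^ s ∂μ ≤ doobConst s C * ∫⁻ x, φ x ^ s ∂μ := by
  have hs0 : 0 < s := by linarith
  have htrunc_meas (n : ℕ) : Measurable fun x => min (F x) n := hF.min measurable_const
  have htrunc (n : ℕ) :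
      ∫⁻ x, min (F x) n ^ s ∂μ ≤ doobConst s C * ∫⁻ x, φ x ^ s ∂μ := by
    refine lintegral_rpow_le_doobConst_mul_of_ne_top hs (htrunc_meas n)
      (fun x => ((min_le_right _ _).trans_lt (natCast_lt_top n)).ne) ?_ hφ fun l => ?_
    · refine ne_top_of_le_ne_top ?_ (lintegral_mono fun x =>
        ENNReal.rpow_le_rpow (min_le_right (F x) (n : ℝ≥0∞)) hs0.le)
      rw [lintegral_const]
      exact ENNReal.mul_ne_top (ENNReal.rpow_ne_top_of_nonneg hs0.le (natCast_ne_top n))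
        (measure_ne_top μ _)
    rcases lt_or_ge l (n : ℝ≥0∞) with hl | hl
    · calc l * μ {x | 2 * l < min (F x) n} ≤ l * μ {x | 2 * l < F x} := by
            gcongr; exact min_le_left _ _
        _ ≤ C * ∫⁻ x in {x | l < F x}, φ x ∂μ := h l
        _ ≤ C * ∫⁻ x in {x | l < min (F x) n}, φ x ∂μ := by
            exact mul_le_mul_right (lintegral_mono_set fun x hx => lt_min hx hl) C
    · have hempty : {x | 2 * l < min (F x) n} = ∅ := Set.eq_empty_of_forall_notMem fun x hx =>
        (hx.trans_le ((min_le_right _ _).trans hl)).not_ge (le_mul_of_one_le_left' one_le_two)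
      rw [hempty, measure_empty, mul_zero]
      exact zero_le
  refine le_of_tendsto' (lintegral_tendsto_of_tendsto_of_monotone
    (fun n => ((htrunc_meas n).pow_const s).aemeasurable)
    (.of_forall fun x n m hnm =>
      ENNReal.rpow_le_rpow (min_le_min_left _ (Nat.cast_le.2 hnm)) hs0.le) (.of_forall fun x => ?_))
    htrunc
  have hlim : Tendsto (fun n : ℕ => min (F x) (n : ℝ≥0∞)) atTop (nhds (F x)) := by
    simpa only [min_top_right] using tendsto_const_nhds.min ENNReal.tendsto_nat_nhds_top
  exact (ENNReal.continuous_rpow_const.tendsto _).comp hlim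

end GoodLambda

namespace DyadicFiltration

variable {X Ω : Type} [MeasurableSpace X] [MeasurableSpace Ω] {μ : Measure X} [SFinite μ]
  {G : DyadicFiltration μ} {ρ : FunctionNorm Ω} {C : ℝ≥0∞} {f : X → Ω → ℝ≥0∞}

theorem measurable_uncurry_indicator {S : Set X} (hS : MeasurableSet S)
    (hf : Measurable (Function.uncurry f)) :
    Measurable (Function.uncurry fun x ω => S.indicator (f · ω) x) :=
  hf.indicator (measurable_fst hS)

theorem WeakBound.mul_meas_inter_le (h : G.WeakBound ρ C) (hf : Measurable (Function.uncurry f))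
    (L : ℕ) {l : ℝ≥0∞} {n : ℕ} {S : Set X} (hS : G.IsSaturated n S)
    (hSl : ∀ x ∈ S, ρ (fun ω => G.maximal n (f · ω) x) ≤ l) :
    l * μ ({x | 2 * l < ρ fun ω => G.maximal L (f · ω) x} ∩ S) ≤ C * ∫⁻ x in S, ρ (f x) ∂μ := by
  set g : X → Ω → ℝ≥0∞ := fun x ω => S.indicator (f · ω) x
  have hg : Measurable (Function.uncurry g) := measurable_uncurry_indicator hS.measurableSet hf
  have hρg : (fun x => ρ (g x)) = S.indicator fun x => ρ (f x) := by
    funext x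
    by_cases hx : x ∈ S
    · simp only [g, Set.indicator_of_mem hx]
    · simp only [g, Set.indicator_of_notMem hx, ρ.map_zero]
  have hsplit (x : X) (hx : x ∈ S) (ω : Ω) :
      G.maximal L (f · ω) x ≤ G.maximal n (f · ω) x + G.maximal L (g · ω) x := by
    refine iSup₂_le fun j hj => ?_
    rcases lt_or_ge j n with hjn | hnj
    · exact (avg_le_maximal hjn _ x).trans le_self_add
    · rw [← avg_indicator hnj hS hx]
      exact (avg_le_maximal hj _ x).trans le_add_self
  have hsub : {x | 2 * l < ρ fun ω => G.maximal L (f · ω) x} ∩ S ⊆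
      {x | l < ρ fun ω => G.maximal L (g · ω) x} := by
    rintro x ⟨hx, hxS⟩
    have hadd := (ρ.mono (hsplit x hxS)).trans
      (ρ.map_add_le (measurable_uncurry_maximal n hf).of_uncurry_left
        (measurable_uncurry_maximal L hg).of_uncurry_left)
    by_contra hle
    refine hx.not_ge (hadd.trans ?_)
    rw [two_mul]
    exact add_le_add (hSl x hxS) (not_lt.1 hle)
  calc _ ≤ l * μ {x | l < ρ fun ω => G.maximal L (g · ω) x} := by gcongr
    _ ≤ C * ∫⁻ x, ρ (g x) ∂μ := h hg L l
    _ = C * ∫⁻ x in S, ρ (f x) ∂μ := by rw [hρg, lintegral_indicator hS.measurableSet]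

theorem WeakBound.mul_meas_two_mul_lt_le (h : G.WeakBound ρ C)
    (hf : Measurable (Function.uncurry f)) (L : ℕ) (l : ℝ≥0∞) {B : Set X}
    (hB : G.IsSaturated 0 B) :
    l * μ ({x | 2 * l < ρ fun ω => G.maximal L (f · ω) x} ∩ B) ≤
      C * ∫⁻ x in {x | l < ρ fun ω => G.maximal L (f · ω) x} ∩ B, ρ (f x) ∂μ := by
  set T := {x | 2 * l < ρ fun ω => G.maximal L (f · ω) x}
  set U : ℕ → Set X := fun n => {x | l < ρ fun ω => G.maximal n (f · ω) x}
  have hUsat (n k : ℕ) (hk : k ≤ n + 1) : G.IsSaturated n (U k) := fun x y hxy hx => by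
    simpa only [U, Set.mem_ofPred_eq, maximal_congr hk hxy] using hx
  have hstep (n : ℕ) : l * μ (T ∩ (U n ∩ B)) ≤ C * ∫⁻ x in U n ∩ B, ρ (f x) ∂μ := by
    induction n with
    | zero =>
      have hempty : U 0 = ∅ := Set.eq_empty_of_forall_notMem fun x (hx : l < _) => by
        simp only [norm_maximal_zero, not_lt_zero] at hx
      simp only [hempty, Set.empty_inter, Set.inter_empty, measure_empty, mul_zero, zero_le]
    | succ n ih =>
      set S := (U (n + 1) ∩ B) \ U n
      have hS : G.IsSaturated n S :=
        ((hUsat n _ le_rfl).inter (hB.mono n.zero_le)).diff (hUsat n n n.le_succ)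
      have hunion : U (n + 1) ∩ B = (U n ∩ B) ∪ S := by
        have hmono : U n ⊆ U (n + 1) := fun x hx =>
          lt_of_lt_of_le hx (norm_maximal_mono_left ρ f x n.le_succ)
        ext x
        have hmono_x := @hmono x
        simp only [S, Set.mem_union, Set.mem_inter_iff, Set.mem_sdiff]
        tauto
      have hdisj : Disjoint (U n ∩ B) S := Set.disjoint_left.2 fun x hx hxS => hxS.2 hx.1
      rw [hunion, Set.inter_union_distrib_left, lintegral_union hS.measurableSet hdisj, mul_add]
      refine (mul_le_mul_right (measure_union_le _ _) l).trans ?_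
      rw [mul_add]
      exact add_le_add ih (h.mul_meas_inter_le hf L hS fun x hx => not_lt.1 hx.2)
  refine le_trans ?_ (hstep L)
  gcongr l * μ ?_
  exact fun x hx =>
    ⟨hx.1, (le_mul_of_one_le_left' one_le_two).trans_lt (show 2 * l < _ from hx.1), hx.2⟩

theorem WeakBound.strongBound (h : G.WeakBound ρ C) {s : ℝ} (hs : 1 < s) :
    G.StrongBound ρ s (doobConst s C) := by
  intro f hf L
  have hfiber (m : ℤ) : ∫⁻ x in G.idx 0 ⁻¹' {m}, ρ (fun ω => G.maximal L (f · ω) x) ^ s ∂μ ≤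
      doobConst s C * ∫⁻ x in G.idx 0 ⁻¹' {m}, ρ (f x) ^ s ∂μ := by
    have hB : G.IsSaturated 0 (G.idx 0 ⁻¹' {m}) := isSaturated_preimage 0 {m}
    have hfin : IsFiniteMeasure (μ.restrict (G.idx 0 ⁻¹' {m})) := by
      refine isFiniteMeasure_restrict.2 ?_
      rcases (G.idx 0 ⁻¹' {m}).eq_empty_or_nonempty with hempty | ⟨x, rfl⟩
      · rw [hempty, measure_empty]
        exact zero_ne_top
      · exact G.measure_ne_top 0 x
    refine lintegral_rpow_le_doobConst_mul hs (measurable_norm_maximal ρ L hf)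
      (ρ.measurable_comp hf) fun l => ?_
    rw [Measure.restrict_apply' hB.measurableSet, Measure.restrict_restrict
      (measurableSet_lt measurable_const (measurable_norm_maximal ρ L hf))]
    exact h.mul_meas_two_mul_lt_le hf L l hB
  rw [← setLIntegral_univ, ← setLIntegral_univ fun x => ρ (f x) ^ s,
    setLIntegral_eq_tsum_fiber (G.measurable_idx 0) .univ,
    setLIntegral_eq_tsum_fiber (G.measurable_idx 0) .univ, ← ENNReal.tsum_mul_left]
  simp only [Set.univ_inter]
  exact ENNReal.tsum_le_tsum hfiber

end DyadicFiltration

namespace FunctionNorm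

variable {Ω Ω' X : Type} [MeasurableSpace Ω] [MeasurableSpace Ω'] [MeasurableSpace X]

/-- The Hardy–Littlewood property of a norm: lattice-valued dyadic maximal functions are of weak
type `(1, 1)`, with a constant independent of the measure and of the filtration. -/
def HardyLittlewoodProperty (ρ : FunctionNorm Ω) : Prop :=
  ∃ C ≠ ∞, ∀ ⦃X : Type⦄ [MeasurableSpace X] (μ : Measure X) [SigmaFinite μ]
    (G : DyadicFiltration μ), G.WeakBound ρ C

theorem HardyLittlewoodProperty.exists_strongBound {ρ : FunctionNorm Ω}
    (h : ρ.HardyLittlewoodProperty) {s : ℝ} (hs : 1 < s) :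
    ∃ C ≠ ∞, ∀ ⦃X : Type⦄ [MeasurableSpace X] (μ : Measure X) [SigmaFinite μ]
      (G : DyadicFiltration μ), G.StrongBound ρ s C := by
  obtain ⟨C, hC, hweak⟩ := h
  exact ⟨doobConst s C, doobConst_ne_top hs hC, fun X _ μ _ G => (hweak μ G).strongBound hs⟩

theorem HardyLittlewoodProperty.of_strongBound {ρ : FunctionNorm Ω} {s : ℝ} (hs : 1 < s)
    {C : ℝ≥0∞} (hC : C ≠ ∞)
    (h : ∀ ⦃X : Type⦄ [MeasurableSpace X] (μ : Measure X) [SigmaFinite μ]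
      (G : DyadicFiltration μ), G.StrongBound ρ s C) : ρ.HardyLittlewoodProperty := by
  refine ⟨1 + C * 2 ^ (s - 1), ?_, fun X _ μ _ G => (h μ G).weakBound hs⟩
  have hpow : (2 : ℝ≥0∞) ^ (s - 1) ≠ ∞ :=
    ENNReal.rpow_ne_top_of_nonneg (by linarith) ENNReal.ofNat_ne_top
  exact ENNReal.add_ne_top.2 ⟨one_ne_top, ENNReal.mul_ne_top hC hpow⟩

theorem hardyLittlewoodProperty_scalar : scalar.HardyLittlewoodProperty :=
  ⟨1, one_ne_top, fun _ _ _ _ _ => DyadicFiltration.weakBound_scalar⟩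

theorem HardyLittlewoodProperty.Lp {ρ : FunctionNorm Ω} (h : ρ.HardyLittlewoodProperty)
    (μ : Measure X) [SigmaFinite μ] {p : ℝ} (hp : 1 < p) :
    (Lp μ p hp ρ).HardyLittlewoodProperty := by
  obtain ⟨C, hC, hstrong⟩ := h.exists_strongBound hp
  refine .of_strongBound hp hC fun Y _ ν _ G f hf L => ?_
  have rpow_root (a : ℝ≥0∞) : (a ^ (1 / p)) ^ p = a := by
    rw [← ENNReal.rpow_mul, one_div_mul_cancel (by positivity), ENNReal.rpow_one]
  have hassoc : Measurable fun a : (Y × X) × Ω => (a.1.1, (a.1.2, a.2)) := by fun_prop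
  have hfx (x : X) : Measurable (Function.uncurry fun y ω => f y (x, ω)) :=
    hf.comp (by fun_prop : Measurable fun a : Y × Ω => (a.1, (x, a.2)))
  have hmeas : Measurable fun z : Y × X => ρ (fun ω => f z.1 (z.2, ω)) ^ p :=
    (ρ.measurable_comp (f := fun (z : Y × X) ω => f z.1 (z.2, ω)) (hf.comp hassoc)).pow_const _
  have hmax : Measurable fun a : (Y × X) × Ω => G.maximal L (f · (a.1.2, a.2)) a.1.1 := by
    simpa only [Function.comp_def, Function.uncurry_def] using
      (DyadicFiltration.measurable_uncurry_maximal (G := G) L hf).comp hassoc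
  have hmeas_max :
      Measurable fun z : Y × X => ρ (fun ω => G.maximal L (f · (z.2, ω)) z.1) ^ p :=
    (ρ.measurable_comp (f := fun (z : Y × X) ω => G.maximal L (f · (z.2, ω)) z.1) hmax).pow_const _
  simp only [FunctionNorm.Lp, rpow_root]
  calc ∫⁻ y, ∫⁻ x, ρ (fun ω => G.maximal L (f · (x, ω)) y) ^ p ∂μ ∂ν
      = ∫⁻ x, ∫⁻ y, ρ (fun ω => G.maximal L (f · (x, ω)) y) ^ p ∂ν ∂μ :=
        lintegral_lintegral_swap hmeas_max.aemeasurable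
    _ ≤ ∫⁻ x, C * ∫⁻ y, ρ (fun ω => f y (x, ω)) ^ p ∂ν ∂μ :=
        lintegral_mono fun x => hstrong ν G (hfx x) L
    _ = C * ∫⁻ y, ∫⁻ x, ρ (fun ω => f y (x, ω)) ^ p ∂μ ∂ν := by
        rw [lintegral_const_mul' _ _ hC, lintegral_lintegral_swap
          (f := fun y x => ρ (fun ω => f y (x, ω)) ^ p) hmeas.aemeasurable]

theorem HardyLittlewoodProperty.weightedComap {ρ : FunctionNorm Ω}
    (h : ρ.HardyLittlewoodProperty) {w : Ω → ℝ≥0∞} (hw : Measurable w) (hw_top : ∀ ω, w ω ≠ ∞)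
    {φ : Ω → Ω'} (hφ : Measurable φ) : (ρ.weightedComap hw hw_top hφ).HardyLittlewoodProperty := by
  obtain ⟨C, hC, hweak⟩ := h
  refine ⟨C, hC, fun X _ μ _ G f hf L l => ?_⟩
  have hweighted := hweak μ G (f := fun x ω => w ω * f x (φ ω)) ((hw.comp measurable_snd).mul
    (hf.comp (measurable_fst.prodMk (hφ.comp measurable_snd)))) L l
  simp only [DyadicFiltration.maximal_const_mul (hw_top _)] at hweighted
  exact hweighted

end FunctionNorm

section ShiftedGrids

/-- The translations of the two dyadic grids on `ℝ` used by the one-third trick, in units of the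
side length `2 ^ k`; the alternating sign makes the grids of consecutive scales nested. -/
def gridShift (a : Bool) (k : ℤ) : ℝ := if a then (-1) ^ k / 3 else 0

/-- The index of the interval of side length `2 ^ k` of the grid `a` containing `x`. -/
def gridIdx (a : Bool) (k : ℤ) (x : ℝ) : ℤ := ⌊x / 2 ^ k - gridShift a k⌋

theorem measurable_gridIdx (a : Bool) (k : ℤ) : Measurable (gridIdx a k) :=
  Int.measurable_floor.comp ((measurable_id.div_const _).sub_const _)

theorem gridIdx_preimage_singleton (a : Bool) (k m : ℤ) : gridIdx a k ⁻¹' {m} =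
    Set.Ico ((m + gridShift a k) * 2 ^ k) ((m + 1 + gridShift a k) * 2 ^ k) := by
  have hpos : (0 : ℝ) < 2 ^ k := by positivity
  ext x
  simp only [gridIdx, Set.mem_preimage, Set.mem_singleton_iff, Int.floor_eq_iff, Set.mem_Ico]
  rw [le_sub_iff_add_le, sub_lt_iff_lt_add, le_div_iff₀ hpos, div_lt_iff₀ hpos]

theorem volume_gridIdx_preimage_singleton (a : Bool) (k m : ℤ) :
    volume (gridIdx a k ⁻¹' {m}) = ENNReal.ofReal (2 ^ k) := by
  rw [gridIdx_preimage_singleton, Real.volume_Ico]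
  congr 1
  ring

theorem abs_sub_lt_of_gridIdx_eq {a : Bool} {k : ℤ} {x y : ℝ} (h : gridIdx a k x = gridIdx a k y) :
    |x - y| < 2 ^ k := by
  have hpos : (0 : ℝ) < 2 ^ k := by positivity
  have hfloor := Int.abs_sub_lt_one_of_floor_eq_floor h
  rwa [sub_sub_sub_cancel_right, ← sub_div, abs_div, abs_of_pos hpos, div_lt_one hpos] at hfloor

theorem exists_gridShift_succ (a : Bool) (k : ℤ) :
    ∃ m : ℤ, 2 * gridShift a (k + 1) = gridShift a k - m := by
  cases a
  · exact ⟨0, by simp [gridShift]⟩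
  · rcases Int.even_or_odd k with hk | hk
    · refine ⟨1, ?_⟩
      norm_num [gridShift, hk.neg_one_zpow, hk.add_one.neg_one_zpow]
    · refine ⟨-1, ?_⟩
      norm_num [gridShift, hk.neg_one_zpow, hk.add_one.neg_one_zpow]

theorem exists_gridIdx_succ (a : Bool) (k : ℤ) :
    ∃ m : ℤ, ∀ x, gridIdx a (k + 1) x = (gridIdx a k x + m) / 2 := by
  obtain ⟨m, hm⟩ := exists_gridShift_succ a k
  refine ⟨m, fun x => ?_⟩
  have hhalf : x / 2 ^ (k + 1) - gridShift a (k + 1) =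
      (x / 2 ^ k - gridShift a k + m) / (2 : ℕ) := by
    have hdiv : x / 2 ^ (k + 1) = x / 2 ^ k / 2 := by
      rw [zpow_add_one₀ two_ne_zero, div_div]
    rw [hdiv]
    push_cast
    linarith
  rw [gridIdx, hhalf, Int.floor_div_natCast, Int.floor_add_intCast]
  rfl

/-- The grid `a`, from the scale `2 ^ N` downwards, as a filtration. -/
def dyadicGrid (a : Bool) (N : ℕ) : DyadicFiltration (volume : Measure ℝ) where
  idx n := gridIdx a (N - n)
  measurable_idx n := measurable_gridIdx a _
  idx_eq_of_succ n x y h := by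
    obtain ⟨m, hm⟩ := exists_gridIdx_succ a ((N : ℤ) - (n + 1 : ℕ))
    rw [show (N : ℤ) - (n + 1 : ℕ) + 1 = N - n by push_cast; ring] at hm
    rw [hm, hm, h]
  measure_ne_top n x := by
    rw [volume_gridIdx_preimage_singleton]
    exact ENNReal.ofReal_ne_top
  measure_le_two_mul n x := by
    rw [volume_gridIdx_preimage_singleton, volume_gridIdx_preimage_singleton,
      ← ENNReal.ofReal_ofNat, ← ENNReal.ofReal_mul zero_le_two, ← zpow_one_add₀ two_ne_zero,
      show 1 + ((N : ℤ) - (n + 1 : ℕ)) = N - n by push_cast; ring]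

/-- The average of `g` over the interval of side length `2 ^ k` of the grid `a` containing `x`. -/
def dyadicAvg (a : Bool) (k : ℤ) (g : ℝ → ℝ≥0∞) (x : ℝ) : ℝ≥0∞ :=
  ⨍⁻ s in gridIdx a k ⁻¹' {gridIdx a k x}, g s ∂volume

/-- The maximal function of `g` over all scales of the grid `a`. -/
def dyadicMaximal (a : Bool) (g : ℝ → ℝ≥0∞) (x : ℝ) : ℝ≥0∞ := ⨆ k, dyadicAvg a k g x

/-- A majorant of the Hardy–Littlewood maximal function of `g` made of the dyadic maximal functions
of two grids. -/
def dyadicMajorant (g : ℝ → ℝ≥0∞) (x : ℝ) : ℝ≥0∞ := 6 * ⨆ a, dyadicMaximal a g x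

theorem dyadicAvg_eq_inv_mul (a : Bool) (k : ℤ) (g : ℝ → ℝ≥0∞) (x : ℝ) :
    dyadicAvg a k g x =
      (ENNReal.ofReal (2 ^ k))⁻¹ * ∫⁻ s in gridIdx a k ⁻¹' {gridIdx a k x}, g s := by
  rw [dyadicAvg, setLAverage_eq, volume_gridIdx_preimage_singleton, ENNReal.div_eq_inv_mul]

theorem dyadicAvg_le_dyadicMajorant (a : Bool) (k : ℤ) (g : ℝ → ℝ≥0∞) (x : ℝ) :
    6 * dyadicAvg a k g x ≤ dyadicMajorant g x :=
  mul_le_mul_right (le_iSup_of_le a (le_iSup (fun k => dyadicAvg a k g x) k)) _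

theorem dyadicMajorant_le {g : ℝ → ℝ≥0∞} {x : ℝ} {R : ℝ≥0∞} (h : ∀ a k, dyadicAvg a k g x ≤ R) :
    dyadicMajorant g x ≤ 6 * R :=
  mul_le_mul_right (iSup_le fun a => iSup_le (h a)) _

theorem dyadicMajorant_mono_ae {g g' : ℝ → ℝ≥0∞} (h : g ≤ᵐ[volume] g') (x : ℝ) :
    dyadicMajorant g x ≤ dyadicMajorant g' x :=
  mul_le_mul_right (iSup_mono fun _ => iSup_mono fun _ =>
    laverage_mono_ae (ae_restrict_of_ae h)) _

theorem dyadicMajorant_tsum_le {ι : Type} [Countable ι] {g : ι → ℝ → ℝ≥0∞}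
    (hg : ∀ i, Measurable (g i)) (x : ℝ) :
    dyadicMajorant (fun s => ∑' i, g i s) x ≤ ∑' i, dyadicMajorant (g i) x := by
  simp only [dyadicMajorant, ENNReal.tsum_mul_left]
  refine dyadicMajorant_le fun a k => ?_
  simp only [dyadicAvg_eq_inv_mul, lintegral_tsum fun i => (hg i).aemeasurable,
    ← ENNReal.tsum_mul_left]
  refine ENNReal.tsum_le_tsum fun i => ?_
  rw [← dyadicAvg_eq_inv_mul]
  exact le_iSup_of_le a (le_iSup (fun k => dyadicAvg a k (g i) x) k)

theorem dyadicMajorant_indicator_le {g : ℝ → ℝ≥0∞} {S : Set ℝ} (hS : MeasurableSet S) {x c : ℝ}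
    (h : ∀ s ∈ S, c ≤ |s - x|) :
    dyadicMajorant (S.indicator g) x ≤ 6 * ((ENNReal.ofReal c)⁻¹ * ∫⁻ s in S, g s) := by
  refine dyadicMajorant_le fun a k => ?_
  rw [dyadicAvg_eq_inv_mul, setLIntegral_indicator hS]
  rcases (S ∩ gridIdx a k ⁻¹' {gridIdx a k x}).eq_empty_or_nonempty with hempty | ⟨s, hsS, hsk⟩
  · rw [hempty, Measure.restrict_empty, lintegral_zero_measure, mul_zero]
    exact zero_le
  · have hck : c ≤ 2 ^ k := (h s hsS).trans (abs_sub_lt_of_gridIdx_eq hsk).le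
    gcongr
    exact Set.inter_subset_left

theorem exists_floor_eq_or_exists_floor_sub_eq (u : ℝ) {σ : ℝ} (hσ : σ = 1 / 3 ∨ σ = -1 / 3) :
    (∃ m : ℤ, ∀ v, |v - u| < 1 / 6 → ⌊v⌋ = m) ∨ ∃ m : ℤ, ∀ v, |v - u| < 1 / 6 → ⌊v - σ⌋ = m := by
  have hround := abs_le.1 (abs_sub_round u)
  rcases lt_or_ge (u - round u) (-(1 / 6)) with hleft | hleft
  · refine .inl ⟨round u - 1, fun v hv => Int.floor_eq_iff.2 ?_⟩
    have hv' := abs_lt.1 hv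
    push_cast
    constructor <;> linarith
  rcases lt_or_ge (1 / 6) (u - round u) with hright | hright
  · refine .inl ⟨round u, fun v hv => Int.floor_eq_iff.2 ?_⟩
    have hv' := abs_lt.1 hv
    constructor <;> linarith
  rcases hσ with rfl | rfl
  · refine .inr ⟨round u - 1, fun v hv => Int.floor_eq_iff.2 ?_⟩
    have hv' := abs_lt.1 hv
    push_cast
    constructor <;> linarith
  · refine .inr ⟨round u, fun v hv => Int.floor_eq_iff.2 ?_⟩
    have hv' := abs_lt.1 hv
    constructor <;> linarith

theorem exists_forall_floor_sub_gridShift_eq (k : ℤ) (u : ℝ) :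
    ∃ (a : Bool) (m : ℤ), ∀ v, |v - u| < 1 / 6 → ⌊v - gridShift a k⌋ = m := by
  have hσ : gridShift true k = 1 / 3 ∨ gridShift true k = -1 / 3 := by
    rcases Int.even_or_odd k with hk | hk <;> simp [gridShift, hk.neg_one_zpow]
  rcases exists_floor_eq_or_exists_floor_sub_eq u hσ with ⟨m, hm⟩ | ⟨m, hm⟩
  · exact ⟨false, m, by simpa [gridShift] using hm⟩
  · exact ⟨true, m, hm⟩

theorem exists_ball_subset_gridIdx_preimage (x : ℝ) {r : ℝ} (hr : 0 < r) : ∃ (a : Bool) (k : ℤ),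
    (2 : ℝ) ^ k ≤ 12 * r ∧ Metric.ball x r ⊆ gridIdx a k ⁻¹' {gridIdx a k x} := by
  obtain ⟨n, hn, hn'⟩ := exists_mem_Ico_zpow (x := 6 * r) (y := (2 : ℝ)) (by positivity) one_lt_two
  have hpos : (0 : ℝ) < 2 ^ (n + 1) := by positivity
  obtain ⟨a, m, hm⟩ := exists_forall_floor_sub_gridShift_eq (n + 1) (x / 2 ^ (n + 1))
  have hidx (s : ℝ) (hs : s ∈ Metric.ball x r) : gridIdx a (n + 1) s = m := by
    refine hm _ ?_
    rw [← sub_div, abs_div, abs_of_pos hpos, div_lt_iff₀ hpos]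
    have hdist : |s - x| < r := hs
    linarith
  refine ⟨a, n + 1, ?_, fun s hs => (hidx s hs).trans (hidx x (Metric.mem_ball_self hr)).symm⟩
  rw [zpow_add_one₀ two_ne_zero]
  linarith

theorem setLAverage_ball_le_dyadicMajorant (g : ℝ → ℝ≥0∞) (x : ℝ) {r : ℝ} (hr : 0 < r) :
    ⨍⁻ s in Metric.ball x r, g s ∂volume ≤ dyadicMajorant g x := by
  obtain ⟨a, k, hk, hsub⟩ := exists_ball_subset_gridIdx_preimage x hr
  have hinv : (ENNReal.ofReal (2 * r))⁻¹ ≤ 6 * (ENNReal.ofReal (2 ^ k))⁻¹ := by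
    have hpos : (0 : ℝ) < 2 ^ k := by positivity
    rw [← ENNReal.ofReal_inv_of_pos (by positivity), ← ENNReal.ofReal_inv_of_pos hpos,
      ← ENNReal.ofReal_ofNat, ← ENNReal.ofReal_mul (by positivity)]
    refine ENNReal.ofReal_le_ofReal ?_
    rw [← div_eq_mul_inv, inv_eq_one_div, div_le_div_iff₀ (by positivity) hpos]
    norm_num
    linarith
  calc ⨍⁻ s in Metric.ball x r, g s ∂volume
      = (ENNReal.ofReal (2 * r))⁻¹ * ∫⁻ s in Metric.ball x r, g s := by
        rw [setLAverage_eq, Real.volume_ball, ENNReal.div_eq_inv_mul]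
    _ ≤ 6 * (ENNReal.ofReal (2 ^ k))⁻¹ * ∫⁻ s in gridIdx a k ⁻¹' {gridIdx a k x}, g s := by
        gcongr
    _ = 6 * dyadicAvg a k g x := by rw [dyadicAvg_eq_inv_mul, mul_assoc]
    _ ≤ dyadicMajorant g x := dyadicAvg_le_dyadicMajorant a k g x

theorem dyadicMaximal_eq_iSup_maximal (a : Bool) (g : ℝ → ℝ≥0∞) (x : ℝ) :
    dyadicMaximal a g x = ⨆ N : ℕ, (dyadicGrid a N).maximal (2 * N + 1) g x := by
  refine le_antisymm (iSup_le fun k => ?_)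
    (iSup_le fun N => iSup₂_le fun n _ => le_iSup (fun k => dyadicAvg a k g x) (N - n))
  obtain ⟨n, hn⟩ : ∃ n : ℕ, (k.natAbs : ℤ) - n = k := ⟨(k.natAbs - k).toNat, by omega⟩
  refine le_iSup_of_le k.natAbs (le_of_eq_of_le ?_
    (DyadicFiltration.avg_le_maximal (n := n) (by omega) g x))
  change dyadicAvg a k g x = dyadicAvg a (k.natAbs - n) g x
  rw [hn]

theorem monotone_maximal_dyadicGrid (a : Bool) (g : ℝ → ℝ≥0∞) (x : ℝ) :
    Monotone fun N : ℕ => (dyadicGrid a N).maximal (2 * N + 1) g x := by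
  intro N M hNM
  refine iSup₂_le fun n hn => le_of_eq_of_le ?_
    (DyadicFiltration.avg_le_maximal (n := n + (M - N)) (by omega) g x)
  change dyadicAvg a (N - n) g x = dyadicAvg a (M - (n + (M - N) : ℕ)) g x
  congr 1
  omega

variable {Ω : Type} [MeasurableSpace Ω] {f : ℝ × Ω → ℝ≥0∞}

theorem measurable_maximal_dyadicGrid (a : Bool) (N L : ℕ) (hf : Measurable f) :
    Measurable fun z : ℝ × Ω => (dyadicGrid a N).maximal L (fun s => f (s, z.2)) z.1 :=
  DyadicFiltration.measurable_uncurry_maximal L (f := fun x ω => f (x, ω)) hf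

theorem measurable_dyadicMaximal (a : Bool) (hf : Measurable f) :
    Measurable fun z : ℝ × Ω => dyadicMaximal a (fun s => f (s, z.2)) z.1 := by
  simp only [dyadicMaximal_eq_iSup_maximal]
  exact .iSup fun N => measurable_maximal_dyadicGrid a N _ hf

theorem measurable_dyadicMajorant (hf : Measurable f) :
    Measurable fun z : ℝ × Ω => dyadicMajorant (fun s => f (s, z.2)) z.1 :=
  (Measurable.iSup fun a => measurable_dyadicMaximal a hf).const_mul 6

namespace FunctionNorm

theorem HardyLittlewoodProperty.exists_norm_dyadicMaximal_le {ρ : FunctionNorm Ω}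
    (h : ρ.HardyLittlewoodProperty) {q : ℝ} (hq : 1 < q) :
    ∃ C ≠ ∞, ∀ (a : Bool) {f : ℝ × Ω → ℝ≥0∞}, Measurable f →
      FunctionNorm.Lp volume q hq ρ (fun z => dyadicMaximal a (fun s => f (s, z.2)) z.1) ≤
        C * FunctionNorm.Lp volume q hq ρ f := by
  obtain ⟨C, hC, hstrong⟩ := h.exists_strongBound hq
  have hq0 : 0 ≤ 1 / q := by positivity
  refine ⟨C ^ (1 / q), ENNReal.rpow_ne_top_of_nonneg hq0 hC, fun a f hf => ?_⟩
  simp only [dyadicMaximal_eq_iSup_maximal]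
  refine ((FunctionNorm.Lp volume q hq ρ).map_iSup_le
    (fun N => measurable_maximal_dyadicGrid a N _ hf)
    fun N M hNM z => monotone_maximal_dyadicGrid a _ _ hNM).trans (iSup_le fun N => ?_)
  exact (ENNReal.rpow_le_rpow (hstrong volume (dyadicGrid a N) (f := fun x ω => f (x, ω)) hf _)
    hq0).trans_eq (ENNReal.mul_rpow_of_nonneg _ _ hq0)

theorem HardyLittlewoodProperty.exists_norm_dyadicMajorant_le {ρ : FunctionNorm Ω}
    (h : ρ.HardyLittlewoodProperty) {q : ℝ} (hq : 1 < q) :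
    ∃ C ≠ ∞, ∀ {f : ℝ × Ω → ℝ≥0∞}, Measurable f →
      FunctionNorm.Lp volume q hq ρ (fun z => dyadicMajorant (fun s => f (s, z.2)) z.1) ≤
        C * FunctionNorm.Lp volume q hq ρ f := by
  obtain ⟨C, hC, hmax⟩ := h.exists_norm_dyadicMaximal_le hq
  refine ⟨6 * (2 * C), ENNReal.mul_ne_top ofNat_ne_top (ENNReal.mul_ne_top ofNat_ne_top hC),
    fun {f} hf => ?_⟩
  let ρq := FunctionNorm.Lp (volume : Measure ℝ) q hq ρ
  let M (a : Bool) (z : ℝ × Ω) : ℝ≥0∞ := dyadicMaximal a (fun s => f (s, z.2)) z.1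
  calc ρq (fun z => 6 * ⨆ a, M a z)
      = 6 * ρq (fun z => ⨆ a, M a z) := ρq.map_const_mul _ ofNat_ne_top
    _ ≤ 6 * ρq (fun z => ∑' a, M a z) := by
        gcongr
        exact ρq.mono fun z => iSup_le fun a => ENNReal.le_tsum a
    _ ≤ 6 * ∑' a, ρq (M a) := by
        gcongr
        exact ρq.map_tsum_le fun a => measurable_dyadicMaximal a hf
    _ ≤ 6 * ∑' _ : Bool, C * ρq f := by
        gcongr with a
        exact hmax a hf
    _ = 6 * (2 * C) * ρq f := by
        rw [tsum_bool]
        ring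

end FunctionNorm

end ShiftedGrids

section Young

variable {G : Type} [AddGroup G] [Countable G]

theorem tsum_convolution_rpow_le {p : ℝ} (hp : 1 < p) (κ a : G → ℝ≥0∞) :
    (∑' k, (∑' l, κ (k - l) * a l) ^ p) ^ (1 / p) ≤ (∑' m, κ m) * (∑' k, a k ^ p) ^ (1 / p) := by
  have hp0 : 0 < p := by linarith
  let _ : MeasurableSpace G := ⊤
  have _ : MeasurableSingletonClass G := ⟨fun _ => trivial⟩
  have hreindex (k : G) : ∑' l, κ (k - l) * a l = ∑' m, κ m * a (-m + k) := by
    rw [← (Equiv.subLeft k).symm.tsum_eq fun l => κ (k - l) * a l]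
    simp only [Equiv.subLeft_symm_apply, sub_eq_add_neg, neg_add_rev, neg_neg, add_neg_cancel_left]
  have htranslate (m : G) : (∑' k, (κ m * a (-m + k)) ^ p) ^ (1 / p) =
      κ m * (∑' k, a k ^ p) ^ (1 / p) := by
    simp_rw [ENNReal.mul_rpow_of_nonneg _ _ hp0.le]
    rw [ENNReal.tsum_mul_left, ENNReal.mul_rpow_of_nonneg _ _ (by positivity), ← ENNReal.rpow_mul,
      mul_one_div_cancel hp0.ne', ENNReal.rpow_one]
    exact congrArg (κ m * · ^ (1 / p)) ((Equiv.addLeft (-m)).tsum_eq fun k => a k ^ p)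
  simp_rw [hreindex, ← ENNReal.tsum_mul_right, ← htranslate]
  simpa only [lintegral_count] using minkowski_lintegral (Measure.count : Measure G)
    (Measure.count : Measure G) hp (f := fun m k => κ m * a (-m + k)) (measurable_of_countable _)

end Young

section Herz

theorem two_rpow_ne_top (r : ℝ) : (2 : ℝ≥0∞) ^ r ≠ ∞ :=
  ENNReal.rpow_ne_top_of_ne_zero two_ne_zero ENNReal.ofNat_ne_top

theorem two_rpow_add (r s : ℝ) : (2 : ℝ≥0∞) ^ (r + s) = 2 ^ r * 2 ^ s :=
  ENNReal.rpow_add _ _ two_ne_zero ENNReal.ofNat_ne_top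

theorem ofReal_two_rpow (r : ℝ) : ENNReal.ofReal (2 ^ r) = 2 ^ r := by
  rw [← ENNReal.ofReal_rpow_of_pos two_pos, ENNReal.ofReal_ofNat]

theorem tsum_two_rpow_neg_mul_abs_ne_top {δ : ℝ} (hδ : 0 < δ) :
    ∑' m : ℤ, (2 : ℝ≥0∞) ^ (-δ * |(m : ℝ)|) ≠ ∞ := by
  have hnat : Summable fun n : ℕ => (2 : ℝ) ^ (-δ * (n : ℝ)) := by
    simp_rw [Real.rpow_mul_natCast zero_le_two]
    exact summable_geometric_of_lt_one (by positivity)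
      (Real.rpow_lt_one_of_one_lt_of_neg one_lt_two (neg_lt_zero.2 hδ))
  have hint : Summable fun m : ℤ => (2 : ℝ) ^ (-δ * |(m : ℝ)|) :=
    .of_nat_of_neg (by simpa using hnat) (by simpa using hnat)
  simpa only [ofReal_two_rpow] using hint.tsum_ofReal_ne_top

theorem measurableSet_herzRing (k : ℤ) : MeasurableSet (herzRing k) :=
  measurableSet_Ioo.diff measurableSet_Ioo

theorem mem_herzRing {k : ℤ} {x : ℝ} :
    x ∈ herzRing k ↔ (2 : ℝ) ^ (k - 1) ≤ |x| ∧ |x| < 2 ^ k := by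
  rw [herzRing, Set.mem_sdiff, Set.mem_Ioo, Set.mem_Ioo, ← abs_lt, ← abs_lt, not_lt, and_comm]

theorem exists_mem_herzRing {x : ℝ} (hx : x ≠ 0) : ∃ k, x ∈ herzRing k := by
  obtain ⟨n, hle, hlt⟩ := exists_mem_Ico_zpow (abs_pos.2 hx) (one_lt_two : (1 : ℝ) < 2)
  exact ⟨n + 1, mem_herzRing.2 ⟨by rwa [add_sub_cancel_right], hlt⟩⟩

theorem volume_herzRing_le (k : ℤ) : volume (herzRing k) ≤ 2 ^ ((k : ℝ) + 1) := by
  refine (measure_mono Set.sdiff_subset).trans_eq ?_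
  rw [Real.volume_Ioo, ← ofReal_two_rpow, Real.rpow_add_one two_ne_zero, Real.rpow_intCast]
  ring_nf

theorem two_zpow_le_abs_sub_of_mem_herzRing {k l : ℤ} (hlk : l + 2 ≤ k) {x s : ℝ}
    (hx : x ∈ herzRing k) (hs : s ∈ herzRing l) : (2 : ℝ) ^ (k - 2) ≤ |x - s| := by
  have hl : (2 : ℝ) ^ l ≤ 2 ^ (k - 2) := zpow_le_zpow_right₀ one_le_two (by omega)
  have hk : (2 : ℝ) ^ (k - 1) = 2 ^ (k - 2) * 2 := by
    rw [← zpow_add_one₀ two_ne_zero]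
    congr 1
    ring
  linarith [abs_sub_abs_le_abs_sub x s, (mem_herzRing.1 hx).1, (mem_herzRing.1 hs).2]

theorem two_zpow_max_le_abs_sub_of_mem_herzRing {k l : ℤ} (h : 2 ≤ |k - l|) {x s : ℝ}
    (hx : x ∈ herzRing k) (hs : s ∈ herzRing l) : (2 : ℝ) ^ (max k l - 2) ≤ |s - x| := by
  rcases le_abs'.1 h with hkl | hlk
  · rw [max_eq_right (by omega)]
    exact two_zpow_le_abs_sub_of_mem_herzRing (by omega) hs hx
  · rw [max_eq_left (by omega), abs_sub_comm]
    exact two_zpow_le_abs_sub_of_mem_herzRing (by omega) hx hs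

namespace FunctionNorm

variable {Ω : Type} [MeasurableSpace Ω] (ρ : FunctionNorm Ω) {α p q : ℝ} (hp : 1 < p) (hq : 1 < q)

/-- The norm of `L^q(R_k; ρ)` on the `k`-th dyadic ring. -/
def ringNorm (k : ℤ) : FunctionNorm (ℝ × Ω) := Lp (volume.restrict (herzRing k)) q hq ρ

theorem ringNorm_le_mul_two_rpow {k : ℤ} {f : ℝ × Ω → ℝ≥0∞} {c : ℝ≥0∞}
    (h : ∀ x ∈ herzRing k, ρ (fun ω => f (x, ω)) ≤ c) :
    ρ.ringNorm hq k f ≤ c * 2 ^ (((k : ℝ) + 1) / q) := by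
  have hq0 : 0 < q := by linarith
  calc ρ.ringNorm hq k f ≤ (∫⁻ _ in herzRing k, c ^ q) ^ (1 / q) := by
        refine ENNReal.rpow_le_rpow ?_ (by positivity)
        exact setLIntegral_mono' (measurableSet_herzRing k)
          fun x hx => ENNReal.rpow_le_rpow (h x hx) hq0.le
    _ = c * volume (herzRing k) ^ (1 / q) := by
        rw [setLIntegral_const, ENNReal.mul_rpow_of_nonneg _ _ (by positivity), ← ENNReal.rpow_mul,
          mul_one_div_cancel hq0.ne', ENNReal.rpow_one]
    _ ≤ c * 2 ^ (((k : ℝ) + 1) / q) := by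
        rw [div_eq_mul_one_div ((k : ℝ) + 1), ENNReal.rpow_mul]
        gcongr
        exact volume_herzRing_le k

theorem setLIntegral_herzRing_le (l : ℤ) {f : ℝ × Ω → ℝ≥0∞} (hf : Measurable f) :
    ∫⁻ s in herzRing l, ρ (fun ω => f (s, ω)) ≤
      ρ.ringNorm hq l f * 2 ^ (((l : ℝ) + 1) * (1 - 1 / q)) := by
  have hqq := Real.HolderConjugate.conjExponent hq
  have hconj : 1 / q.conjExponent = 1 - 1 / q := by rw [one_div, one_div, hqq.one_sub_inv]
  have hholder := ENNReal.lintegral_mul_le_Lp_mul_Lq (volume.restrict (herzRing l)) hqq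
    (ρ.measurable_comp (f := fun s ω => f (s, ω)) hf).aemeasurable
    (aemeasurable_const (b := (1 : ℝ≥0∞)))
  simp only [Pi.mul_apply, mul_one, ENNReal.one_rpow, lintegral_one, Measure.restrict_apply_univ,
    hconj] at hholder
  refine hholder.trans (mul_le_mul_right ?_ _)
  rw [ENNReal.rpow_mul]
  exact ENNReal.rpow_le_rpow (volume_herzRing_le l) (hconj ▸ one_div_nonneg.2 hqq.symm.nonneg)

/-- The norm of the Herz space `K^{α,p}_q(ℝ; ρ)`. -/
def herz (α : ℝ) : FunctionNorm (ℝ × Ω) :=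
  (Lp Measure.count p hp (Lp volume q hq ρ)).weightedComap
    (w := fun z : ℤ × ℝ × Ω => (herzRing z.1).indicator (fun _ => 2 ^ (z.1 * α)) z.2.1)
    (measurable_from_prod_countable_right fun k => (Measurable.indicator
      (f := fun _ => 2 ^ (k * α)) measurable_const (measurableSet_herzRing k)).comp measurable_fst)
    (fun z => ne_top_of_le_ne_top (two_rpow_ne_top (z.1 * α)) (Set.indicator_le_self' (by simp) _))
    measurable_snd

theorem HardyLittlewoodProperty.herz {ρ : FunctionNorm Ω} (h : ρ.HardyLittlewoodProperty) (α : ℝ) :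
    (ρ.herz hp hq α).HardyLittlewoodProperty :=
  ((h.Lp volume hq).Lp Measure.count hp).weightedComap _ _ _

theorem herz_eq_tsum (α : ℝ) (f : ℝ × Ω → ℝ≥0∞) :
    ρ.herz hp hq α f = (∑' k : ℤ, (2 ^ (k * α) * ρ.ringNorm hq k f) ^ p) ^ (1 / p) := by
  change (∫⁻ k : ℤ, _ ^ p ∂Measure.count) ^ (1 / p) = _
  rw [lintegral_count]
  congr! 4 with k
  rw [← map_const_mul _ _ (two_rpow_ne_top _)]
  change (∫⁻ x, _ ^ q) ^ (1 / q) = (∫⁻ x in herzRing k, _ ^ q) ^ (1 / q)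
  rw [← lintegral_indicator (measurableSet_herzRing k)]
  refine congrArg (· ^ (1 / q)) (lintegral_congr fun x => ?_)
  by_cases hx : x ∈ herzRing k
  · simp only [hx, Set.indicator_of_mem]
  · simp only [hx, not_false_eq_true, Set.indicator_of_notMem, zero_mul, ρ.map_zero,
      ENNReal.zero_rpow_of_pos (zero_lt_one.trans hq)]

theorem herz_eq_herzNorm1 (α : ℝ) (f : ℝ × Ω → ℝ≥0∞) : ρ.herz hp hq α f =
    herzNorm1 α (ENNReal.ofReal p) (ENNReal.ofReal q) fun x => ρ fun ω => f (x, ω) := by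
  rw [herz_eq_tsum]
  simp only [herzNorm1, lpZNorm, lqNormOn, ENNReal.ofReal_ne_top, if_false, ofReal_two_rpow,
    ENNReal.toReal_ofReal (zero_le_one.trans hp.le),
    ENNReal.toReal_ofReal (zero_le_one.trans hq.le)]
  rfl

theorem herz_le_mul_of_forall_le (α : ℝ) {C : ℝ≥0∞} (hC : C ≠ ∞)
    {f g : ℝ × Ω → ℝ≥0∞} (h : ∀ t, ρ (fun ω => f (t, ω)) ≤ C * ρ (fun ω => g (t, ω))) :
    ρ.herz hp hq α f ≤ C * ρ.herz hp hq α g := by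
  have hp0 : 0 < p := by linarith
  have hq0 : 0 < q := by linarith
  rw [← map_const_mul _ _ hC, herz_eq_tsum, herz_eq_tsum]
  refine ENNReal.rpow_le_rpow (ENNReal.tsum_le_tsum fun k => ?_) (by positivity)
  refine ENNReal.rpow_le_rpow (mul_le_mul_right ?_ _) hp0.le
  refine ENNReal.rpow_le_rpow (lintegral_mono fun t => ?_) (by positivity)
  exact ENNReal.rpow_le_rpow ((h t).trans_eq (ρ.map_const_mul _ hC).symm) hq0.le

variable {ρ} {f : ℝ × Ω → ℝ≥0∞}

theorem ringNorm_dyadicMajorant_le_of_two_le_abs_sub {k l : ℤ} (hkl : 2 ≤ |k - l|)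
    (hf : Measurable f) :
    ρ.ringNorm hq k (fun z => dyadicMajorant ((herzRing l).indicator fun s => f (s, z.2)) z.1) ≤
      6 * 2 ^ (2 - max (k : ℝ) l + (l + 1) * (1 - 1 / q) + (k + 1) / q) * ρ.ringNorm hq l f := by
  set c : ℝ≥0∞ := 6 * 2 ^ (2 - max (k : ℝ) l) with hc
  have hdist : (ENNReal.ofReal ((2 : ℝ) ^ (max k l - 2)))⁻¹ = 2 ^ (2 - max (k : ℝ) l) := by
    rw [← Real.rpow_intCast, ofReal_two_rpow, ← ENNReal.rpow_neg]
    push_cast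
    rw [neg_sub]
  have hpointwise (x : ℝ) (hx : x ∈ herzRing k) :
      ρ (fun ω => dyadicMajorant ((herzRing l).indicator fun s => f (s, ω)) x) ≤
        c * ∫⁻ s in herzRing l, ρ fun ω => f (s, ω) := by
    calc ρ (fun ω => dyadicMajorant ((herzRing l).indicator fun s => f (s, ω)) x)
        ≤ ρ (fun ω => c * ∫⁻ s in herzRing l, f (s, ω)) := ρ.mono fun ω => by
          rw [hc, mul_assoc, ← hdist]
          exact dyadicMajorant_indicator_le (measurableSet_herzRing l)
            fun s hs => two_zpow_max_le_abs_sub_of_mem_herzRing hkl hx hs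
      _ = c * ρ (fun ω => ∫⁻ s in herzRing l, f (s, ω)) :=
          ρ.map_const_mul _ (ENNReal.mul_ne_top ENNReal.ofNat_ne_top (two_rpow_ne_top _))
      _ ≤ c * ∫⁻ s in herzRing l, ρ fun ω => f (s, ω) :=
          mul_le_mul_right (ρ.map_lintegral_le _ (f := fun s ω => f (s, ω)) hf) _
  calc ρ.ringNorm hq k (fun z => dyadicMajorant ((herzRing l).indicator fun s => f (s, z.2)) z.1)
      ≤ c * (∫⁻ s in herzRing l, ρ fun ω => f (s, ω)) * 2 ^ (((k : ℝ) + 1) / q) :=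
        ρ.ringNorm_le_mul_two_rpow hq hpointwise
    _ ≤ c * (ρ.ringNorm hq l f * 2 ^ (((l : ℝ) + 1) * (1 - 1 / q))) * 2 ^ (((k : ℝ) + 1) / q) := by
        gcongr
        exact ρ.setLIntegral_herzRing_le hq l hf
    _ = 6 * 2 ^ (2 - max (k : ℝ) l + (l + 1) * (1 - 1 / q) + (k + 1) / q) *
          ρ.ringNorm hq l f := by
        rw [hc, two_rpow_add, two_rpow_add]
        ring

theorem HardyLittlewoodProperty.exists_ringNorm_dyadicMajorant_le (h : ρ.HardyLittlewoodProperty) :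
    ∃ C ≠ ∞, ∀ {f : ℝ × Ω → ℝ≥0∞}, Measurable f → ∀ k l : ℤ,
      ρ.ringNorm hq k (fun z => dyadicMajorant ((herzRing l).indicator fun s => f (s, z.2)) z.1) ≤
        C * ρ.ringNorm hq l f := by
  obtain ⟨C, hC, hmax⟩ := h.exists_norm_dyadicMajorant_le hq
  refine ⟨C, hC, fun {f} hf k l => ?_⟩
  have hind : FunctionNorm.Lp volume q hq ρ
      (fun z => (herzRing l).indicator (fun s => f (s, z.2)) z.1) = ρ.ringNorm hq l f := by
    change (∫⁻ x, _ ^ q) ^ (1 / q) = (∫⁻ x in herzRing l, _ ^ q) ^ (1 / q)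
    rw [← lintegral_indicator (measurableSet_herzRing l)]
    refine congrArg (· ^ (1 / q)) (lintegral_congr fun x => ?_)
    by_cases hx : x ∈ herzRing l
    · simp only [hx, Set.indicator_of_mem]
    · simp only [hx, not_false_eq_true, Set.indicator_of_notMem, ρ.map_zero,
        ENNReal.zero_rpow_of_pos (zero_lt_one.trans hq)]
  rw [← hind]
  refine le_trans ?_ (hmax (DyadicFiltration.measurable_uncurry_indicator
    (f := fun s ω => f (s, ω)) (measurableSet_herzRing l) hf))
  exact ENNReal.rpow_le_rpow (setLIntegral_le_lintegral _ _)
    (one_div_nonneg.2 (zero_le_one.trans hq.le))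

theorem herz_far_exponent_le {δ : ℝ} (hδ : δ ≤ α + 1 / q) (hδ' : δ ≤ 1 - 1 / q - α) (k l : ℝ) :
    k * α + (2 - max k l + (l + 1) * (1 - 1 / q) + (k + 1) / q) ≤
      3 + (-δ * |k - l| + l * α) := by
  rw [div_eq_mul_one_div (k + 1)]
  rcases le_total l k with hlk | hkl
  · rw [max_eq_left hlk, abs_of_nonneg (sub_nonneg.2 hlk)]
    linarith [mul_le_mul_of_nonneg_right hδ' (sub_nonneg.2 hlk)]
  · rw [max_eq_right hkl, abs_of_nonpos (sub_nonpos.2 hkl)]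
    linarith [mul_le_mul_of_nonneg_right hδ (sub_nonneg.2 hkl)]

theorem herz_near_exponent_le {δ : ℝ} (hδ : 0 ≤ δ) {k l : ℝ} (hkl : |k - l| ≤ 1) :
    k * α ≤ |α| + δ + (-δ * |k - l| + l * α) := by
  have hα : (k - l) * α ≤ |α| := (le_abs_self _).trans <| by
    rw [abs_mul]
    exact mul_le_of_le_one_left (abs_nonneg _) hkl
  linarith [mul_le_of_le_one_right hδ hkl]

theorem HardyLittlewoodProperty.exists_two_rpow_mul_ringNorm_dyadicMajorant_le
    (h : ρ.HardyLittlewoodProperty) {δ : ℝ} (hδ : 0 ≤ δ) (hδα : δ ≤ α + 1 / q)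
    (hδα' : δ ≤ 1 - 1 / q - α) :
    ∃ K ≠ ∞, ∀ {f : ℝ × Ω → ℝ≥0∞}, Measurable f → ∀ k l : ℤ,
      2 ^ (k * α) * ρ.ringNorm hq k
          (fun z => dyadicMajorant ((herzRing l).indicator fun s => f (s, z.2)) z.1) ≤
        K * 2 ^ (-δ * |((k - l : ℤ) : ℝ)|) * (2 ^ (l * α) * ρ.ringNorm hq l f) := by
  obtain ⟨C, hC, hring⟩ := h.exists_ringNorm_dyadicMajorant_le hq
  refine ⟨max (6 * 2 ^ (3 : ℝ)) (C * 2 ^ (|α| + δ)), max_ne_top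
    (ENNReal.mul_ne_top ENNReal.ofNat_ne_top (two_rpow_ne_top _))
    (ENNReal.mul_ne_top hC (two_rpow_ne_top _)), fun {f} hf k l => ?_⟩
  have combine {A : ℝ≥0∞} {c e : ℝ} (he : k * α + e ≤ c + (-δ * |((k - l : ℤ) : ℝ)| + l * α))
      (hA : A * 2 ^ c ≤ max (6 * 2 ^ (3 : ℝ)) (C * 2 ^ (|α| + δ))) :
      2 ^ (k * α) * (A * 2 ^ e * ρ.ringNorm hq l f) ≤
        max (6 * 2 ^ (3 : ℝ)) (C * 2 ^ (|α| + δ)) * 2 ^ (-δ * |((k - l : ℤ) : ℝ)|) *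
          (2 ^ (l * α) * ρ.ringNorm hq l f) := by
    calc 2 ^ (k * α) * (A * 2 ^ e * ρ.ringNorm hq l f)
        = A * 2 ^ (k * α + e) * ρ.ringNorm hq l f := by
          rw [two_rpow_add]
          ring
      _ ≤ A * 2 ^ (c + (-δ * |((k - l : ℤ) : ℝ)| + l * α)) * ρ.ringNorm hq l f := by
          gcongr
          exact one_le_two
      _ = A * 2 ^ c * 2 ^ (-δ * |((k - l : ℤ) : ℝ)|) * (2 ^ (l * α) * ρ.ringNorm hq l f) := by
          rw [two_rpow_add, two_rpow_add]
          ring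
      _ ≤ _ := by gcongr
  rcases le_or_gt 2 |k - l| with hfar | hnear
  · refine (mul_le_mul_right (ringNorm_dyadicMajorant_le_of_two_le_abs_sub hq hfar hf) _).trans
      (combine ?_ (le_max_left _ _))
    exact_mod_cast herz_far_exponent_le hδα hδα' (k : ℝ) l
  · have hkl : |(k : ℝ) - l| ≤ 1 := by exact_mod_cast Int.lt_add_one_iff.1 hnear
    refine (mul_le_mul_right ((hring hf k l).trans_eq ?_) _).trans
      (combine (e := 0) ?_ (le_max_right _ _))
    · rw [ENNReal.rpow_zero, mul_one]
    · simpa only [add_zero, Int.cast_sub] using herz_near_exponent_le hδ hkl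

theorem dyadicMajorant_le_tsum_indicator_herzRing {g : ℝ → ℝ≥0∞} (hg : Measurable g) (x : ℝ) :
    dyadicMajorant g x ≤ ∑' l : ℤ, dyadicMajorant ((herzRing l).indicator g) x := by
  have hsum : g ≤ᵐ[volume] fun s => ∑' l, (herzRing l).indicator g s := by
    filter_upwards [Measure.ae_ne volume (0 : ℝ)] with s hs
    obtain ⟨l, hl⟩ := exists_mem_herzRing hs
    exact (Set.indicator_of_mem hl g).ge.trans (ENNReal.le_tsum l)
  exact (dyadicMajorant_mono_ae hsum x).trans
    (dyadicMajorant_tsum_le (fun l => hg.indicator (measurableSet_herzRing l)) x)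

theorem ringNorm_dyadicMajorant_le_tsum (hf : Measurable f) (k : ℤ) :
    ρ.ringNorm hq k (fun z => dyadicMajorant (fun s => f (s, z.2)) z.1) ≤ ∑' l : ℤ,
      ρ.ringNorm hq k
        (fun z => dyadicMajorant ((herzRing l).indicator fun s => f (s, z.2)) z.1) := by
  have hpiece (l : ℤ) : Measurable fun z : ℝ × Ω =>
      dyadicMajorant ((herzRing l).indicator fun s => f (s, z.2)) z.1 := by
    simpa only [Function.uncurry_def] using
      measurable_dyadicMajorant (DyadicFiltration.measurable_uncurry_indicator
        (f := fun s ω => f (s, ω)) (measurableSet_herzRing l) hf)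
  refine le_trans ((ρ.ringNorm hq k).mono fun z =>
    dyadicMajorant_le_tsum_indicator_herzRing (hf.comp measurable_prodMk_right) z.1) ?_
  exact (ρ.ringNorm hq k).map_tsum_le hpiece

theorem HardyLittlewoodProperty.exists_herz_dyadicMajorant_le (h : ρ.HardyLittlewoodProperty)
    (hα : -(1 / q) < α) (hα' : α < 1 - 1 / q) :
    ∃ C ≠ ∞, ∀ {f : ℝ × Ω → ℝ≥0∞}, Measurable f →
      ρ.herz hp hq α (fun z => dyadicMajorant (fun s => f (s, z.2)) z.1) ≤
        C * ρ.herz hp hq α f := by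
  obtain ⟨δ, hδ, hδlt⟩ := exists_between (lt_min (neg_lt_iff_pos_add.1 hα) (sub_pos.2 hα'))
  obtain ⟨hδα, hδα'⟩ := lt_min_iff.1 hδlt
  obtain ⟨K, hK, hlocal⟩ :=
    h.exists_two_rpow_mul_ringNorm_dyadicMajorant_le hq hδ.le hδα.le hδα'.le
  refine ⟨∑' m : ℤ, K * 2 ^ (-δ * |(m : ℝ)|), ?_, fun {f} hf => ?_⟩
  · rw [ENNReal.tsum_mul_left]
    exact ENNReal.mul_ne_top hK (tsum_two_rpow_neg_mul_abs_ne_top hδ)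
  rw [herz_eq_tsum, herz_eq_tsum]
  refine le_trans ?_ (tsum_convolution_rpow_le hp (fun m : ℤ => K * 2 ^ (-δ * |(m : ℝ)|))
    fun l : ℤ => 2 ^ (l * α) * ρ.ringNorm hq l f)
  gcongr with k
  refine le_trans ?_ (ENNReal.tsum_le_tsum fun l => hlocal hf k l)
  rw [ENNReal.tsum_mul_left]
  exact mul_le_mul_right (ringNorm_dyadicMajorant_le_tsum hq hf k) _

end FunctionNorm

end Herz

section IteratedMajorant

/-- The composition of the one-dimensional majorants in the successive variables, the first variable
being treated last. -/
def iteratedMajorant : (n : ℕ) → ((Fin n → ℝ) → ℝ≥0∞) → (Fin n → ℝ) → ℝ≥0∞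
  | 0, g => g
  | n + 1, g => fun x => iteratedMajorant n
      (fun z => dyadicMajorant (fun s => g (Fin.snoc z s)) (x (Fin.last n))) (Fin.init x)

theorem measurable_snoc (n : ℕ) :
    Measurable fun a : ℝ × (Fin n → ℝ) => (Fin.snoc a.2 a.1 : Fin (n + 1) → ℝ) := by
  refine measurable_pi_iff.2 (Fin.lastCases ?_ fun j => ?_)
  · simpa only [Fin.snoc_last] using measurable_fst
  · simp only [Fin.snoc_castSucc]
    exact (measurable_pi_apply j).comp measurable_snd

theorem piFinSuccAbove_last_symm_apply (n : ℕ) (a : ℝ × (Fin n → ℝ)) :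
    (MeasurableEquiv.piFinSuccAbove (fun _ : Fin (n + 1) => ℝ) (Fin.last n)).symm a =
      Fin.snoc a.2 a.1 :=
  Fin.insertNth_last' _ _

theorem setLIntegral_ball_succ {n : ℕ} {g : (Fin (n + 1) → ℝ) → ℝ≥0∞} (hg : Measurable g)
    (x : Fin (n + 1) → ℝ) {r : ℝ} (hr : 0 < r) :
    ∫⁻ y in Metric.ball x r, g y = ∫⁻ z in Metric.ball (Fin.init x : Fin n → ℝ) r,
      ∫⁻ s in Metric.ball (x (Fin.last n)) r, g (Fin.snoc z s) := by
  have hmp := (volume_preserving_piFinSuccAbove (fun _ : Fin (n + 1) => ℝ) (Fin.last n)).symm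
  have hball : (MeasurableEquiv.piFinSuccAbove (fun _ : Fin (n + 1) => ℝ) (Fin.last n)).symm ⁻¹'
      Metric.ball x r = Metric.ball (x (Fin.last n)) r ×ˢ Metric.ball (Fin.init x) r := by
    ext a
    rw [Set.mem_preimage, piFinSuccAbove_last_symm_apply, Set.mem_prod, ball_pi _ hr, ball_pi _ hr]
    simp only [Set.mem_univ_pi, Fin.forall_fin_succ', Fin.snoc_castSucc, Fin.snoc_last, Fin.init,
      and_comm]
  rw [← hmp.setLIntegral_comp_preimage_emb (MeasurableEquiv.measurableEmbedding _), hball]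
  simp only [piFinSuccAbove_last_symm_apply]
  rw [Measure.volume_eq_prod, ← Measure.prod_restrict, lintegral_prod_symm']
  exact hg.comp (measurable_snoc n)

theorem setLAverage_ball_succ {n : ℕ} {g : (Fin (n + 1) → ℝ) → ℝ≥0∞} (hg : Measurable g)
    (x : Fin (n + 1) → ℝ) {r : ℝ} (hr : 0 < r) :
    ⨍⁻ y in Metric.ball x r, g y ∂volume = ⨍⁻ z in Metric.ball (Fin.init x : Fin n → ℝ) r,
      ⨍⁻ s in Metric.ball (x (Fin.last n)) r, g (Fin.snoc z s) ∂volume ∂volume := by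
  have hvol : volume (Metric.ball x r) = volume (Metric.ball (x (Fin.last n)) r) *
      volume (Metric.ball (Fin.init x : Fin n → ℝ) r) := by
    rw [Real.volume_pi_ball _ hr, Real.volume_pi_ball _ hr, Real.volume_ball,
      ← ENNReal.ofReal_mul (by positivity), Fintype.card_fin, Fintype.card_fin, pow_succ']
  have hvol_ne_zero : volume (Metric.ball (x (Fin.last n)) r) ≠ 0 :=
    (Metric.measure_ball_pos volume _ hr).ne'
  simp only [setLAverage_eq, ENNReal.div_eq_inv_mul]
  rw [lintegral_const_mul' _ _ (ENNReal.inv_ne_top.2 hvol_ne_zero), setLIntegral_ball_succ hg x hr,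
    hvol, ENNReal.mul_inv (.inl hvol_ne_zero) (.inl measure_ball_lt_top.ne)]
  ring

theorem setLAverage_ball_le_iteratedMajorant {n : ℕ} {g : (Fin n → ℝ) → ℝ≥0∞} (hg : Measurable g)
    (x : Fin n → ℝ) {r : ℝ} (hr : 0 < r) :
    ⨍⁻ y in Metric.ball x r, g y ∂volume ≤ iteratedMajorant n g x := by
  induction n with
  | zero =>
    have hball : Metric.ball x r = {x} := Set.Subsingleton.eq_singleton_of_mem
      (Set.subsingleton_of_subsingleton) (Metric.mem_ball_self hr)
    have hvol : volume ({x} : Set (Fin 0 → ℝ)) = 1 := by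
      rw [← hball, Real.volume_pi_ball _ hr, Fintype.card_fin, pow_zero, ENNReal.ofReal_one]
    rw [hball, setLAverage_eq, lintegral_singleton, hvol, mul_one, div_one, iteratedMajorant]
  | succ n ih =>
    have hsnoc : Measurable fun a : ℝ × (Fin n → ℝ) => g (Fin.snoc a.2 a.1) :=
      hg.comp (measurable_snoc n)
    have hmaj : Measurable fun z : Fin n → ℝ =>
        dyadicMajorant (fun s => g (Fin.snoc z s)) (x (Fin.last n)) := by
      simpa only [Function.comp_def] using
        (measurable_dyadicMajorant hsnoc).comp (measurable_prodMk_left (x := x (Fin.last n)))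
    rw [setLAverage_ball_succ hg x hr]
    refine le_trans (laverage_mono_ae (.of_forall fun z => ?_)) (ih hmaj (Fin.init x))
    exact setLAverage_ball_le_dyadicMajorant _ _ hr

theorem ball_div_subset_eucBall (n : ℕ) (x : Fin n → ℝ) {r : ℝ} (hr : 0 < r) :
    Metric.ball x (r / (n + 1)) ⊆ eucBall n x r := by
  intro y hy
  have hcoord (i : Fin n) : (y i - x i) ^ 2 ≤ (r / (n + 1)) ^ 2 :=
    sq_le_sq' (neg_le_of_abs_le ((dist_le_pi_dist y x i).trans hy.le))
      (le_of_abs_le ((dist_le_pi_dist y x i).trans hy.le))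
  calc ∑ i, (y i - x i) ^ 2
      ≤ ∑ _i : Fin n, (r / (n + 1)) ^ 2 := Finset.sum_le_sum fun i _ => hcoord i
    _ = n * r ^ 2 / (n + 1) ^ 2 := by
        rw [Finset.sum_const, Finset.card_univ, Fintype.card_fin, nsmul_eq_mul, div_pow,
          mul_div_assoc]
    _ < r ^ 2 := by
        rw [div_lt_iff₀ (by positivity)]
        rw [mul_comm]
        exact mul_lt_mul_of_pos_left (by nlinarith [(n.cast_nonneg : (0 : ℝ) ≤ n)]) (pow_pos hr 2)

theorem eucBall_subset_ball (n : ℕ) (x : Fin n → ℝ) {r : ℝ} (hr : 0 < r) :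
    eucBall n x r ⊆ Metric.ball x r := fun y hy => by
  refine (dist_pi_lt_iff hr).2 fun i => abs_lt_of_sq_lt_sq ?_ hr.le
  exact (Finset.single_le_sum (f := fun i => (y i - x i) ^ 2)
    (fun i _ => sq_nonneg _) (Finset.mem_univ i)).trans_lt hy

theorem volume_ball_eq_mul_volume_ball_div (n : ℕ) (x : Fin n → ℝ) {r : ℝ} (hr : 0 < r) :
    volume (Metric.ball x r) = (n + 1) ^ n * volume (Metric.ball x (r / (n + 1))) := by
  have hn : ((n : ℝ≥0∞) + 1) ^ n = ENNReal.ofReal ((n + 1) ^ n) := by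
    rw [ENNReal.ofReal_pow (by positivity), ENNReal.ofReal_add n.cast_nonneg zero_le_one,
      ENNReal.ofReal_natCast, ENNReal.ofReal_one]
  rw [Real.volume_pi_ball _ hr, Real.volume_pi_ball _ (by positivity), hn,
    ← ENNReal.ofReal_mul (by positivity), Fintype.card_fin, ← mul_pow]
  congr 2
  field_simp

theorem centeredMax_le_mul_iteratedMajorant {n : ℕ} {g : (Fin n → ℝ) → ℝ≥0∞} (hg : Measurable g)
    (x : Fin n → ℝ) : centeredMax n g x ≤ (n + 1) ^ n * iteratedMajorant n g x := by
  refine iSup₂_le fun r hr => ?_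
  have hn : ((n : ℝ≥0∞) + 1) ^ n ≠ 0 := pow_ne_zero _ (by simp)
  have hn' : ((n : ℝ≥0∞) + 1) ^ n ≠ ∞ := ENNReal.pow_ne_top (by simp)
  calc (volume (eucBall n x r))⁻¹ * ∫⁻ y in eucBall n x r, g y
      ≤ (volume (Metric.ball x (r / (n + 1))))⁻¹ * ∫⁻ y in Metric.ball x r, g y := by
        gcongr
        · exact ball_div_subset_eucBall n x hr
        · exact eucBall_subset_ball n x hr
    _ = (n + 1) ^ n * ⨍⁻ y in Metric.ball x r, g y ∂volume := by
        rw [setLAverage_eq, ENNReal.div_eq_inv_mul, volume_ball_eq_mul_volume_ball_div n x hr,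
          ENNReal.mul_inv (.inl hn) (.inl hn'), mul_assoc, ← mul_assoc (_ ^ n),
          ENNReal.mul_inv_cancel hn hn', one_mul]
    _ ≤ (n + 1) ^ n * iteratedMajorant n g x := by
        gcongr
        exact setLAverage_ball_le_iteratedMajorant hg x hr

end IteratedMajorant

section MixedHerz

namespace FunctionNorm

variable {Ω Ω' : Type} [MeasurableSpace Ω] [MeasurableSpace Ω']

/-- The pullback along `φ : Ω → Ω'` of a norm on `Ω`. -/
def comap (ρ : FunctionNorm Ω) {φ : Ω → Ω'} (hφ : Measurable φ) : FunctionNorm Ω' :=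
  ρ.weightedComap (measurable_one : Measurable (1 : Ω → ℝ≥0∞)) (fun _ => one_ne_top) hφ

theorem comap_apply (ρ : FunctionNorm Ω) {φ : Ω → Ω'} (hφ : Measurable φ) (f : Ω' → ℝ≥0∞) :
    ρ.comap hφ f = ρ fun ω => f (φ ω) :=
  congrArg ρ (funext fun _ => one_mul _)

theorem HardyLittlewoodProperty.comap {ρ : FunctionNorm Ω} (h : ρ.HardyLittlewoodProperty)
    {φ : Ω → Ω'} (hφ : Measurable φ) : (ρ.comap hφ).HardyLittlewoodProperty :=
  h.weightedComap _ _ hφ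

section lp

variable {ι : Type} [MeasurableSpace ι] [MeasurableSingletonClass ι] [Countable ι] {u : ℝ}

/-- The `ℓ^u` norm of scalar families indexed by `ι`. -/
def lp (hu : 1 < u) : FunctionNorm ι := (Lp Measure.count u hu scalar).comap measurable_fst

theorem lp_apply (hu : 1 < u) (a : ι → ℝ≥0∞) : lp hu a = (∑' i, a i ^ u) ^ (1 / u) := by
  rw [lp, comap_apply, ← lintegral_count]
  rfl

theorem hardyLittlewoodProperty_lp (hu : 1 < u) :
    (lp hu : FunctionNorm ι).HardyLittlewoodProperty :=
  (hardyLittlewoodProperty_scalar.Lp Measure.count hu).comap measurable_fst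

end lp

theorem measurable_snoc_prodMk (Ω : Type) [MeasurableSpace Ω] (n : ℕ) :
    Measurable fun a : ℝ × (Fin n → ℝ) × Ω => ((Fin.snoc a.2.1 a.1 : Fin (n + 1) → ℝ), a.2.2) :=
  ((measurable_snoc n).comp (by fun_prop : Measurable fun a : ℝ × (Fin n → ℝ) × Ω =>
    (a.1, a.2.1))).prodMk measurable_snd.snd

/-- The norm of the mixed-norm Herz space of functions on `ℝⁿ` with values in the lattice
normed by `ρ`. -/
def mixedHerz (ρ : FunctionNorm Ω) : {n : ℕ} → {p q : Fin n → ℝ} → (∀ i, 1 < p i) →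
    (∀ i, 1 < q i) → (Fin n → ℝ) → FunctionNorm ((Fin n → ℝ) × Ω)
  | 0, _, _, _, _, _ => ρ.comap (measurable_prodMk_left (x := fun i => i.elim0))
  | n + 1, _, _, hp, hq, α =>
    ((ρ.mixedHerz (fun i => hp i.castSucc) (fun i => hq i.castSucc) (Fin.init α)).herz
      (hp (Fin.last n)) (hq (Fin.last n)) (α (Fin.last n))).comap (measurable_snoc_prodMk Ω n)

variable {n : ℕ} {p q α : Fin n → ℝ} (hp : ∀ i, 1 < p i) (hq : ∀ i, 1 < q i)

theorem mixedHerz_eq_mixedHerzNormE (ρ : FunctionNorm Ω) (α : Fin n → ℝ)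
    (f : (Fin n → ℝ) × Ω → ℝ≥0∞) :
    ρ.mixedHerz hp hq α f = mixedHerzNormE n α (fun i => ENNReal.ofReal (p i))
      (fun i => ENNReal.ofReal (q i)) fun x => ρ fun ω => f (x, ω) := by
  induction n with
  | zero => rw [mixedHerz, comap_apply, mixedHerzNormE]
  | succ n ih =>
    rw [mixedHerz, comap_apply, herz_eq_herzNorm1]
    simp only [ih]
    rfl

theorem HardyLittlewoodProperty.mixedHerz {ρ : FunctionNorm Ω} (h : ρ.HardyLittlewoodProperty)
    (α : Fin n → ℝ) : (ρ.mixedHerz hp hq α).HardyLittlewoodProperty := by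
  induction n with
  | zero => exact h.comap _
  | succ n ih => exact ((ih _ _ _).herz _ _ _).comap _

theorem HardyLittlewoodProperty.exists_mixedHerz_iteratedMajorant_le {ρ : FunctionNorm Ω}
    (h : ρ.HardyLittlewoodProperty) (hα : ∀ i, -(1 / q i) < α i ∧ α i < 1 - 1 / q i) :
    ∃ C ≠ ∞, ∀ {f : (Fin n → ℝ) × Ω → ℝ≥0∞}, Measurable f →
      ρ.mixedHerz hp hq α (fun z => iteratedMajorant n (fun y => f (y, z.2)) z.1) ≤
        C * ρ.mixedHerz hp hq α f := by
  induction n with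
  | zero => exact ⟨1, one_ne_top, fun _ => (one_mul _).ge⟩
  | succ n ih =>
    obtain ⟨C, hC, hiter⟩ := ih (fun i => hp i.castSucc) (fun i => hq i.castSucc)
      (α := Fin.init α) fun i => hα i.castSucc
    obtain ⟨D, hD, hlast⟩ := (h.mixedHerz (fun i => hp i.castSucc) (fun i => hq i.castSucc)
      (Fin.init α)).exists_herz_dyadicMajorant_le (hp (Fin.last n)) (hq (Fin.last n))
        (hα (Fin.last n)).1 (hα (Fin.last n)).2
    refine ⟨C * D, ENNReal.mul_ne_top hC hD, fun {f} hf => ?_⟩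
    have hsnoc : Measurable fun a : ℝ × (Fin n → ℝ) × Ω => f (Fin.snoc a.2.1 a.1, a.2.2) :=
      hf.comp (measurable_snoc_prodMk Ω n)
    have hmaj : Measurable fun a : ℝ × (Fin n → ℝ) × Ω =>
        dyadicMajorant (fun s => f (Fin.snoc a.2.1 s, a.2.2)) a.1 :=
      (measurable_dyadicMajorant hsnoc :)
    rw [FunctionNorm.mixedHerz, comap_apply, comap_apply, mul_assoc]
    simp only [iteratedMajorant, Fin.snoc_last, Fin.init_snoc]
    refine (herz_le_mul_of_forall_le _ _ _ _ hC fun t => hiter ?_).trans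
      (mul_le_mul_right (hlast hsnoc) _)
    simpa only [Function.comp_def] using hmaj.comp (measurable_prodMk_left (x := t))

end FunctionNorm

end MixedHerz

theorem mixedHerz_FS_HL_general {Ω : Type} [MeasurableSpace Ω] {ρ : FunctionNorm Ω}
    (hρ : ρ.HardyLittlewoodProperty) {n : ℕ} {p q α : Fin n → ℝ} (hp : ∀ i, 1 < p i)
    (hq : ∀ i, 1 < q i) (hα : ∀ i, -(1 / q i) < α i ∧ α i < 1 - 1 / q i) :
    ∃ C : ℝ≥0∞, 0 < C ∧ C ≠ ∞ ∧ ∀ f : (Fin n → ℝ) × Ω → ℝ≥0∞, Measurable f →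
      mixedHerzNormE n α (fun i => ENNReal.ofReal (p i)) (fun i => ENNReal.ofReal (q i))
          (fun x => ρ fun ω => centeredMax n (fun y => f (y, ω)) x) ≤
        C * mixedHerzNormE n α (fun i => ENNReal.ofReal (p i)) (fun i => ENNReal.ofReal (q i))
          (fun x => ρ fun ω => f (x, ω)) := by
  obtain ⟨C, hC, hiter⟩ := hρ.exists_mixedHerz_iteratedMajorant_le hp hq hα
  have hn : ((n : ℝ≥0∞) + 1) ^ n ≠ ∞ := ENNReal.pow_ne_top (by simp)
  refine ⟨(n + 1) ^ n * C + 1, by simp, by finiteness, fun f hf => ?_⟩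
  rw [← ρ.mixedHerz_eq_mixedHerzNormE hp hq α fun z => centeredMax n (fun y => f (y, z.2)) z.1,
    ← ρ.mixedHerz_eq_mixedHerzNormE hp hq α f]
  calc ρ.mixedHerz hp hq α (fun z => centeredMax n (fun y => f (y, z.2)) z.1)
      ≤ ρ.mixedHerz hp hq α
          (fun z => (n + 1) ^ n * iteratedMajorant n (fun y => f (y, z.2)) z.1) :=
        (ρ.mixedHerz hp hq α).mono fun z =>
          centeredMax_le_mul_iteratedMajorant (hf.comp measurable_prodMk_right) z.1
    _ = (n + 1) ^ n *
          ρ.mixedHerz hp hq α (fun z => iteratedMajorant n (fun y => f (y, z.2)) z.1) :=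
        (ρ.mixedHerz hp hq α).map_const_mul _ hn
    _ ≤ (n + 1) ^ n * (C * ρ.mixedHerz hp hq α f) := mul_le_mul_right (hiter hf) _
    _ ≤ ((n + 1) ^ n * C + 1) * ρ.mixedHerz hp hq α f := by
        rw [← mul_assoc]
        exact mul_le_mul_left le_self_add _

/-- Fefferman–Stein vector-valued maximal inequality on mixed-norm
Herz spaces. -/
theorem mixedHerz_FS_HL (n : ℕ) (p q α : Fin n → ℝ)
    (hp : ∀ i, 1 < p i) (hq : ∀ i, 1 < q i)
    (hα : ∀ i, -(1 / q i) < α i ∧ α i < 1 - 1 / q i)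
    (u : ℝ) (hu : 1 < u) :
    ∃ C : ℝ≥0∞, 0 < C ∧ C ≠ ∞ ∧
      ∀ f : ℤ → (Fin n → ℝ) → ℂ, (∀ j, Measurable (f j)) →
        mixedHerzNormE n α (fun i => ENNReal.ofReal (p i)) (fun i => ENNReal.ofReal (q i))
            (fun x => (∑' j : ℤ, centeredMax n (fun y => (‖f j y‖₊ : ℝ≥0∞)) x ^ u) ^ (1 / u)) ≤
          C * mixedHerzNormE n α (fun i => ENNReal.ofReal (p i)) (fun i => ENNReal.ofReal (q i))
            (fun x => (∑' j : ℤ, (‖f j x‖₊ : ℝ≥0∞) ^ u) ^ (1 / u)) := by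
  obtain ⟨C, hC_pos, hC, hbound⟩ :=
    mixedHerz_FS_HL_general (FunctionNorm.hardyLittlewoodProperty_lp (ι := ℤ) hu) hp hq hα
  refine ⟨C, hC_pos, hC, fun f hf => ?_⟩
  simpa only [FunctionNorm.lp_apply] using hbound (fun z => (‖f z.2 z.1‖₊ : ℝ≥0∞))
    (measurable_from_prod_countable_left fun j => (hf j).enorm)
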